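/- arXiv:1810.08022 — 4 statements merged into one kernel-verified Lean document; each statement's English description precedes it below -/
import Mathlib

section
/- For every positive integer n and every complex number q with q ≠ 0 and q ≠ −1, the (2+q+q⁻¹)-enumeration of alternating sign matrices of size n equals d_{n,1}(0,q); that is, A_n(2+q+q⁻¹) = det_{1≤i,j≤n}( binom(i+j−2, j−1)·(1−(−q)^{j−i+1})/(1+q) ). -/
open Finset

noncomputable section

/-- A matrix is an alternating sign matrix: entries in {-1,0,1}, all row and column sums 1,
and all partial row and column sums (from the start) equal to 0 or 1. -/
def IsASM {n : ℕ} (A : Matrix (Fin n) (Fin n) ℤ) : Prop :=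
  (∀ i j, A i j = -1 ∨ A i j = 0 ∨ A i j = 1) ∧
  (∀ i, ∑ j, A i j = 1) ∧
  (∀ j, ∑ i, A i j = 1) ∧
  (∀ i j, (∑ j' ∈ Finset.Iic j, A i j') = 0 ∨ (∑ j' ∈ Finset.Iic j, A i j') = 1) ∧
  (∀ i j, (∑ i' ∈ Finset.Iic i, A i' j) = 0 ∨ (∑ i' ∈ Finset.Iic i, A i' j) = 1)

open scoped Classical in
/-- The (finite) set of all alternating sign matrices of size n; since every ASM has entries
in {-1,0,1}, it occurs in the image below. -/
noncomputable def asmFinset (n : ℕ) : Finset (Matrix (Fin n) (Fin n) ℤ) :=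
  ((Finset.univ : Finset (Matrix (Fin n) (Fin n) (Fin 3))).image
    (fun B => Matrix.of fun i j => ((B i j : ℕ) : ℤ) - 1)).filter (fun A => IsASM A)

/-- μ(A): the number of entries of A equal to -1. -/
def asmMu {n : ℕ} (A : Matrix (Fin n) (Fin n) ℤ) : ℕ :=
  (Finset.univ.filter (fun p : Fin n × Fin n => A p.1 p.2 = -1)).card

/-- The Q-enumeration A_n(Q) = ∑_A Q^{μ(A)} of alternating sign matrices of size n. -/
noncomputable def asmEnum {S : Type*} [CommRing S] (n : ℕ) (Q : S) : S :=
  ∑ A ∈ asmFinset n, Q ^ asmMu A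

/-!
Alternating sign matrices are the configurations of the six-vertex model on a square lattice with
domain wall boundary conditions, an entry `-1` being a turning vertex whose weight we take to be
`2 + q + q⁻¹`. Give the weights spectral parameters `u i` in the rows and `v j` in the columns such
that the Yang–Baxter equation holds. The transfer matrices of the rows then commute, so that the
partition function is symmetric in `u`.

With `y` for the spectral parameter of the first column, the partition function is a polynomial in
`y` of degree less than its size `n`, and at `y = 1 - u i` it freezes to a product times a partition
function of size `n - 1`. With its denominators cleared, the determinant of the
`1 / (vertexA * vertexB)` has the same values there, up to explicit products; it also vanishes where
`y` is the spectral parameter of another column. This is enough to interpolate, and yields Izergin's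
determinant formula by induction.

Now let all spectral parameters tend to `0` along a line: `u i = α i * X` and `v j = β j * X` in
`K⟦X⟧`. Up to a factor depending on the row only, `1 / (vertexA * vertexB)` is the generating
function of `binom(a + b, b) * a_{b - a + 1}(q)`, so that dividing the determinant by the two
Vandermonde determinants leaves `d_{n,1}(0, q)` as `X` tends to `0`. This argument needs an infinite
field and `q ≠ -1`; it applies to the variable of `ℤ[T;T⁻¹]`, which specializes to every unit of
every commutative ring.
-/

open Matrix (vecCons)

section Paths

variable {R κ : Type*} [CommRing R] [Fintype κ]

theorem sum_fin_succ_fun {M : Type*} [AddCommMonoid M] {n : ℕ} (f : (Fin (n + 1) → κ) → M) :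
    ∑ s, f s = ∑ a, ∑ t, f (vecCons a t) := by
  rw [← Fintype.sum_prod_type']
  exact (Equiv.sum_comp (Fin.consEquiv fun _ ↦ κ) f).symm

theorem prod_ofFn_apply_eq_sum_paths [DecidableEq κ] {n : ℕ} (M : Fin n → Matrix κ κ R) (a b : κ) :
    (List.ofFn M).prod a b = ∑ P : Fin n → κ,
      if vecCons a P (Fin.last n) = b then ∏ i, M i (vecCons a P i.castSucc) (P i) else 0 := by
  induction n generalizing a with
  | zero => simp [Matrix.one_apply]
  | succ n ih =>
    simp only [List.ofFn_succ, List.prod_cons, Matrix.mul_apply, ih, sum_fin_succ_fun, mul_sum,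
      mul_ite, mul_zero, Fin.prod_univ_succ, ← Fin.succ_last, ← Fin.succ_castSucc,
      Matrix.cons_val_succ, Fin.castSucc_zero, Matrix.cons_val_zero]

end Paths

section Lattice

variable {R : Type*} [CommRing R] {n : ℕ}

/-- The Boltzmann weights of the vertices of a lattice with two-state edges: `w l t r b` is the
weight of a vertex whose left, top, right and bottom edges have the states `l`, `t`, `r`, `b`. -/
abbrev VertexWeights (R : Type*) : Type _ := Bool → Bool → Bool → Bool → R

/-- The transfer matrix of one row of vertices with weights `w 0, w 1, …`, between the states of the
vertical edges above and below it. The state of the leftmost horizontal edge is `l`, that of the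
rightmost one is `true`. -/
def transferMatrix (w : Fin n → VertexWeights R) (l : Bool) :
    Matrix (Fin n → Bool) (Fin n → Bool) R :=
  .of fun s s' ↦ (List.ofFn fun j ↦ Matrix.of fun l r ↦ w j l (s j) r (s' j)).prod l true

/-- The partition function of a rectangular lattice with domain wall boundary conditions: the edges
are `false` on the left and at the top, and `true` on the right and at the bottom. -/
def partitionFn {m : ℕ} (w : Fin m → Fin n → VertexWeights R) : R :=
  (List.ofFn fun i ↦ transferMatrix (w i) false).prod (fun _ ↦ false) (fun _ ↦ true)

theorem transferMatrix_zero (w : Fin 0 → VertexWeights R) (l : Bool) (s s' : Fin 0 → Bool) :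
    transferMatrix w l s s' = if l then 1 else 0 := by
  simp [transferMatrix, Matrix.one_apply]

theorem transferMatrix_succ (w : Fin (n + 1) → VertexWeights R) (l : Bool)
    (s s' : Fin (n + 1) → Bool) :
    transferMatrix w l s s' = ∑ r, w 0 l (s 0) r (s' 0) *
      transferMatrix (fun j ↦ w j.succ) r (fun j ↦ s j.succ) (fun j ↦ s' j.succ) := by
  simp only [transferMatrix, Matrix.of_apply, List.ofFn_succ, List.prod_cons, Matrix.mul_apply]

theorem partitionFn_eq_sum {m : ℕ} (w : Fin m → Fin n → VertexWeights R) :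
    partitionFn w = ∑ P : Fin m → Fin n → Bool, ∑ H : Fin m → Fin n → Bool,
      if vecCons (fun _ ↦ false) P (Fin.last m) = (fun _ ↦ true) ∧
        ∀ i, vecCons false (H i) (Fin.last n) = true
      then ∏ i, ∏ j, w i j (vecCons false (H i) j.castSucc)
        (vecCons (fun _ ↦ false) P i.castSucc j) (H i j) (P i j)
      else 0 := by
  rw [partitionFn, prod_ofFn_apply_eq_sum_paths]
  refine sum_congr rfl fun P _ ↦ ?_
  simp only [transferMatrix, Matrix.of_apply, prod_ofFn_apply_eq_sum_paths, prod_univ_sum,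
    Fintype.piFinset_univ, prod_ite_zero, mem_univ, true_imp_iff, ite_and]
  split_ifs <;> simp

theorem map_transferMatrix {S : Type*} [CommRing S] (f : R →+* S) (w : Fin n → VertexWeights R)
    (l : Bool) :
    (transferMatrix w l).map f = transferMatrix (fun j l t r b ↦ f (w j l t r b)) l := by
  ext s s'
  simp only [Matrix.map_apply, transferMatrix, Matrix.of_apply, prod_ofFn_apply_eq_sum_paths,
    map_sum, apply_ite f, map_prod, map_zero]

theorem map_partitionFn {S : Type*} [CommRing S] (f : R →+* S) {m : ℕ}
    (w : Fin m → Fin n → VertexWeights R) :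
    f (partitionFn w) = partitionFn fun i j l t r b ↦ f (w i j l t r b) := by
  simp only [partitionFn_eq_sum, map_sum, apply_ite f, map_prod, map_zero]

theorem transferMatrix_mul_apply_succ (w w' : Fin (n + 1) → VertexWeights R) (l l' : Bool)
    (s s' : Fin (n + 1) → Bool) :
    (transferMatrix w l * transferMatrix w' l') s s' = ∑ r, ∑ r',
      (∑ b, w 0 l (s 0) r b * w' 0 l' b r' (s' 0)) *
        (transferMatrix (fun j ↦ w j.succ) r * transferMatrix (fun j ↦ w' j.succ) r')
          (fun j ↦ s j.succ) (fun j ↦ s' j.succ) := by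
  simp only [Matrix.mul_apply, sum_fin_succ_fun, transferMatrix_succ, Matrix.cons_val_zero,
    Matrix.cons_val_succ, Fintype.sum_bool, mul_sum, ← sum_add_distrib]
  exact sum_congr rfl fun t _ ↦ by ring

/-- Baxter's train argument: the crossing `X` is moved through all the columns of two rows. -/
theorem sum_smul_transferMatrix_mul (X : VertexWeights R) (ρ : R)
    (w w' : Fin n → VertexWeights R)
    (hX : ∀ k k', X k k' true true = if k && k' then ρ else 0)
    (hYB : ∀ j a b s c d s',
      ∑ k, ∑ k', X a b k k' * ∑ m, w j k s c m * w' j k' m d s' =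
        ∑ k, ∑ k', (∑ m, w' j a s k m * w j b m k' s') * X k k' c d) (a b : Bool) :
    ∑ k, ∑ k', X a b k k' • (transferMatrix w k * transferMatrix w' k') =
      ρ • (transferMatrix w' a * transferMatrix w b) := by
  induction n generalizing a b with
  | zero =>
    ext s s'
    cases a <;> cases b <;> simp [Matrix.mul_apply, transferMatrix_zero, hX]
  | succ n ih =>
    ext s s'
    let T := transferMatrix fun j ↦ w j.succ
    let T' := transferMatrix fun j ↦ w' j.succ
    let t : Fin n → Bool := fun j ↦ s j.succ
    let t' : Fin n → Bool := fun j ↦ s' j.succ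
    have ih' (k k' : Bool) :
        ∑ c, ∑ d, X k k' c d * (T c * T' d) t t' = ρ * (T' k * T k') t t' := by
      simpa only [Matrix.sum_apply, Matrix.smul_apply, smul_eq_mul] using congr_fun₂ (ih
        (fun j ↦ w j.succ) (fun j ↦ w' j.succ) (fun j ↦ hYB j.succ) k k') t t'
    simp only [Matrix.sum_apply, Matrix.smul_apply, smul_eq_mul, transferMatrix_mul_apply_succ]
    calc ∑ k, ∑ k', X a b k k' * ∑ c, ∑ d,
          (∑ m, w 0 k (s 0) c m * w' 0 k' m d (s' 0)) * (T c * T' d) t t'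
      _ = ∑ c, ∑ d, (∑ k, ∑ k', X a b k k' * ∑ m, w 0 k (s 0) c m * w' 0 k' m d (s' 0)) *
          (T c * T' d) t t' := by
        simp only [Fintype.sum_bool]
        ring
      _ = ∑ k, ∑ k', (∑ m, w' 0 a (s 0) k m * w 0 b m k' (s' 0)) *
          ∑ c, ∑ d, X k k' c d * (T c * T' d) t t' := by
        simp only [hYB 0]
        simp only [Fintype.sum_bool]
        ring
      _ = ρ * ∑ k, ∑ k', (∑ m, w' 0 a (s 0) k m * w 0 b m k' (s' 0)) * (T' k * T k') t t' := by
        simp only [ih']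
        simp only [Fintype.sum_bool]
        ring

end Lattice

section SixVertex

variable {R : Type*} [CommRing R] {m n : ℕ}

/-- The weights of the six-vertex model, in the gauge where one of the two turning vertices has
weight `1` and the other one has weight `c`. -/
def sixVertexWeights (a b c : R) : VertexWeights R
  | false, false, false, false | true, true, true, true => a
  | false, true, false, true | true, false, true, false => b
  | false, false, true, true => 1
  | true, true, false, false => c
  | _, _, _, _ => 0

/-- The weights of the crossing of two horizontal lines that intertwines two rows of six-vertex
weights. -/
def crossingWeights (ρ δ β β' : R) : VertexWeights R
  | false, false, false, false | true, true, true, true => ρ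
  | false, true, false, true => β
  | true, false, true, false => β'
  | false, true, true, false | true, false, false, true => δ
  | _, _, _, _ => 0

theorem yang_baxter {a b a' b' η ρ δ β β' : R} (h₁ : ρ * a = δ * b + β * a')
    (h₂ : ρ * b' = β' * b + δ * a') (h₃ : a * b' = a' * b + η * δ) (x y s c d s' : Bool) :
    let w := sixVertexWeights a b (β * η)
    let w' := sixVertexWeights a' b' (β' * η)
    let X := crossingWeights ρ δ β β'
    ∑ k, ∑ k', X x y k k' * ∑ m, w k s c m * w' k' m d s' =
      ∑ k, ∑ k', (∑ m, w' x s k m * w y m k' s') * X k k' c d := by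
  simp only [Fintype.sum_bool]
  cases x <;> cases y <;> cases s <;> cases c <;> cases d <;> cases s' <;>
    simp only [sixVertexWeights, crossingWeights, mul_zero, zero_mul, add_zero, zero_add] <;>
    grind

theorem smul_transferMatrix_mul_comm {a b a' b' η : Fin n → R} {ρ δ β β' : R}
    (h₁ : ∀ j, ρ * a j = δ * b j + β * a' j) (h₂ : ∀ j, ρ * b' j = β' * b j + δ * a' j)
    (h₃ : ∀ j, a j * b' j = a' j * b j + η j * δ) :
    let T := transferMatrix (fun j ↦ sixVertexWeights (a j) (b j) (β * η j)) false
    let T' := transferMatrix (fun j ↦ sixVertexWeights (a' j) (b' j) (β' * η j)) false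
    ρ • (T * T') = ρ • (T' * T) := by
  have train := sum_smul_transferMatrix_mul (crossingWeights ρ δ β β') ρ _ _
    (fun k k' ↦ by cases k <;> cases k' <;> rfl) (fun j ↦ yang_baxter (h₁ j) (h₂ j) (h₃ j))
    false false
  simpa [Fintype.sum_bool, crossingWeights] using train

theorem map_sixVertexWeights {S : Type*} [CommRing S] (f : R →+* S) (a b c : R)
    (l t r b' : Bool) :
    f (sixVertexWeights a b c l t r b') = sixVertexWeights (f a) (f b) (f c) l t r b' := by
  cases l <;> cases t <;> cases r <;> cases b' <;> simp [sixVertexWeights]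

/-- The weight of a vertex whose edges all have the same state, as a function of the spectral
parameters of its row and of its column. -/
def vertexA (u v : R) : R := 1 - u - v

/-- The weight of a vertex at which two lines of different states cross. -/
def vertexB (q p u v : R) : R := 1 + p * u + q * v

/-- The product of the weights of the two turning vertices. -/
def vertexC (q p u v : R) : R := (1 + p) * (q - (q - 1) * u) * ((1 + p) * (1 + (q - 1) * v))

/-- The transfer matrix of one row with domain wall boundary conditions, spectral parameter `u` in
the row and `v j` in the columns. -/
def rowTransfer (q p u : R) (v : Fin n → R) : Matrix (Fin n → Bool) (Fin n → Bool) R :=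
  transferMatrix
    (fun j ↦ sixVertexWeights (vertexA u (v j)) (vertexB q p u (v j)) (vertexC q p u (v j))) false

theorem map_rowTransfer {S : Type*} [CommRing S] (f : R →+* S) (q p u : R) (v : Fin n → R) :
    (rowTransfer q p u v).map f = rowTransfer (f q) (f p) (f u) (fun j ↦ f (v j)) := by
  simp [rowTransfer, map_transferMatrix, map_sixVertexWeights, vertexA, vertexB, vertexC]

theorem smul_rowTransfer_mul_comm {q p : R} (hqp : q * p = 1) (u u' : R) (v : Fin n → R) :
    (1 + q + p * u - q * u') • (rowTransfer q p u v * rowTransfer q p u' v) =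
      (1 + q + p * u - q * u') • (rowTransfer q p u' v * rowTransfer q p u v) := by
  refine smul_transferMatrix_mul_comm (δ := u' - u) ?_ ?_ ?_ <;>
    · simp only [vertexA, vertexB]
      grind

open Polynomial in
theorem rowTransfer_mul_comm {q p : R} (hqp : q * p = 1) (u u' : R) (v : Fin n → R) :
    rowTransfer q p u v * rowTransfer q p u' v = rowTransfer q p u' v * rowTransfer q p u v := by
  -- Over `R[X]`, replacing `u` by `u + X` makes the factor of the train argument cancellable.
  let T (x : R[X]) := rowTransfer (C q) (C p) x fun j ↦ C (v j)
  let ρ : R[X] := 1 + C q + C p * (C u + X) - C q * C u'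
  have hqp' : C q * C p = 1 := by rw [← C_mul, hqp, C_1]
  have hρ : C q * ρ = X + C (q * (1 + q + p * u - q * u')) := by
    simp only [ρ, C_mul, C_add, C_sub, C_1]
    linear_combination X * hqp'
  have hreg : IsLeftRegular ρ :=
    .of_mul (a := C q) (hρ ▸ (monic_X_add_C _).isRegular.left)
  have hcomm : T (C u + X) * T (C u') = T (C u') * T (C u + X) :=
    Matrix.ext fun i j ↦ hreg (congr_fun₂ (smul_rowTransfer_mul_comm hqp' (C u + X) (C u') _) i j)
  have heval := congr_arg (Matrix.map · (evalRingHom 0)) hcomm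
  simp only [T, Matrix.map_mul, map_rowTransfer] at heval
  simpa using heval

/-- The partition function of the six-vertex model with domain wall boundary conditions. -/
def sixVertexPartitionFn (q p : R) (u : Fin m → R) (v : Fin n → R) : R :=
  partitionFn fun i j ↦ sixVertexWeights (vertexA (u i) (v j)) (vertexB q p (u i) (v j))
    (vertexC q p (u i) (v j))

theorem map_sixVertexPartitionFn {S : Type*} [CommRing S] (f : R →+* S) (q p : R)
    (u : Fin m → R) (v : Fin n → R) :
    f (sixVertexPartitionFn q p u v) =
      sixVertexPartitionFn (f q) (f p) (fun i ↦ f (u i)) (fun j ↦ f (v j)) := by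
  simp [sixVertexPartitionFn, map_partitionFn, map_sixVertexWeights, vertexA, vertexB, vertexC]

theorem sixVertexPartitionFn_eq_prod (q p : R) (u : Fin m → R) (v : Fin n → R) :
    sixVertexPartitionFn q p u v =
      (List.ofFn fun i ↦ rowTransfer q p (u i) v).prod (fun _ ↦ false) (fun _ ↦ true) := rfl

theorem sixVertexPartitionFn_comp_perm {q p : R} (hqp : q * p = 1) (σ : Equiv.Perm (Fin m))
    (u : Fin m → R) (v : Fin n → R) :
    sixVertexPartitionFn q p (u ∘ σ) v = sixVertexPartitionFn q p u v := by
  simp only [sixVertexPartitionFn_eq_prod]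
  refine congr_fun₂ ((σ.ofFn_comp_perm fun i ↦ rowTransfer q p (u i) v).prod_eq' ?_) _ _
  simp only [List.pairwise_ofFn, commute_iff_eq]
  exact fun _ _ _ ↦ rowTransfer_mul_comm hqp _ _ v

end SixVertex

section Freezing

variable {R : Type*} [CommRing R] {m n : ℕ}

theorem transferMatrix_true_false (a b c : Fin n → R) (s' : Fin n → Bool) :
    transferMatrix (fun j ↦ sixVertexWeights (a j) (b j) (c j)) true (fun _ ↦ false) s' =
      if s' = fun _ ↦ false then ∏ j, b j else 0 := by
  induction n with
  | zero => simp [transferMatrix_zero, funext_iff]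
  | succ n ih =>
    simp only [transferMatrix_succ, Fintype.sum_bool, ih, Fin.prod_univ_succ, funext_iff,
      Fin.forall_fin_succ]
    cases s' 0 <;> simp [sixVertexWeights]

theorem transferMatrix_false_cons_true (a b c : Fin (n + 1) → R) (x : Bool) (s s' : Fin n → Bool) :
    transferMatrix (fun j ↦ sixVertexWeights (a j) (b j) (c j)) false (vecCons true s)
        (vecCons x s') =
      if x then b 0 *
        transferMatrix (fun j ↦ sixVertexWeights (a j.succ) (b j.succ) (c j.succ)) false s s'
      else 0 := by
  cases x <;> simp [transferMatrix_succ, sixVertexWeights]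

theorem prod_transferMatrix_cons_true (a b c : Fin m → Fin (n + 1) → R) (s s' : Fin n → Bool) :
    (List.ofFn fun i ↦ transferMatrix (fun j ↦ sixVertexWeights (a i j) (b i j) (c i j)) false).prod
        (vecCons true s) (vecCons true s') =
      (∏ i, b i 0) * (List.ofFn fun i ↦ transferMatrix
        (fun j ↦ sixVertexWeights (a i j.succ) (b i j.succ) (c i j.succ)) false).prod s s' := by
  induction m generalizing s with
  | zero => simp [Matrix.one_apply, Matrix.vecCons, Fin.cons_inj]
  | succ m ih =>
    simp only [List.ofFn_succ, List.prod_cons, Matrix.mul_apply, sum_fin_succ_fun,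
      Fintype.sum_bool, transferMatrix_false_cons_true, ih, Fin.prod_univ_succ, if_true, mul_sum,
      Bool.false_eq_true, if_false, zero_mul, sum_const_zero, add_zero]
    exact sum_congr rfl fun t _ ↦ by ring

theorem partitionFn_sixVertexWeights_of_eq_zero (a b c : Fin (m + 1) → Fin (n + 1) → R)
    (ha : a 0 0 = 0) :
    partitionFn (fun i j ↦ sixVertexWeights (a i j) (b i j) (c i j)) =
      (∏ j : Fin n, b 0 j.succ) * ((∏ i : Fin m, b i.succ 0) *
        partitionFn fun (i : Fin m) (j : Fin n) ↦
          sixVertexWeights (a i.succ j.succ) (b i.succ j.succ) (c i.succ j.succ)) := by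
  have htrue : (fun _ : Fin (n + 1) ↦ true) = vecCons true fun _ ↦ true := by
    ext j; cases j using Fin.cases <;> rfl
  simp only [partitionFn]
  rw [← prod_transferMatrix_cons_true (fun i ↦ a i.succ) (fun i ↦ b i.succ) (fun i ↦ c i.succ),
    ← htrue]
  simp only [List.ofFn_succ, List.prod_cons, Matrix.mul_apply, sum_fin_succ_fun, Fintype.sum_bool,
    transferMatrix_succ (fun j ↦ sixVertexWeights (a 0 j) (b 0 j) (c 0 j)), Matrix.cons_val_zero,
    Matrix.cons_val_succ, transferMatrix_true_false]
  simp [sixVertexWeights, ha]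

theorem exists_castSucc_eq_false_of_last_eq_true {f : Fin m → Bool}
    (hf : vecCons false f (Fin.last m) = true) :
    ∃ i, vecCons false f i.castSucc = false ∧ f i = true := by
  by_contra! h
  have : ∀ i, vecCons false f i = false := by
    intro i
    induction i using Fin.induction with
    | zero => rfl
    | succ i ih => simpa using h i ih
  simp [this] at hf

open Polynomial in
theorem natDegree_partitionFn_le {w : Fin (m + 1) → Fin (n + 1) → VertexWeights R[X]}
    (h₀ : ∀ i r, (w i 0 false false r true).natDegree = 0)
    (h₁ : ∀ i l t r b, (w i 0 l t r b).natDegree ≤ 1)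
    (h₂ : ∀ i j l t r b, (w i (Fin.succ j) l t r b).natDegree = 0) :
    (partitionFn w).natDegree ≤ m := by
  rw [partitionFn_eq_sum]
  refine natDegree_sum_le_of_forall_le _ _ fun P _ ↦ natDegree_sum_le_of_forall_le _ _ fun H _ ↦ ?_
  split_ifs with h
  swap
  · simp
  obtain ⟨i₀, htop, hbot⟩ : ∃ i, vecCons (fun _ ↦ false) P i.castSucc 0 = false ∧ P i 0 = true := by
    have hcol (i : Fin (m + 2)) :
        vecCons (fun _ ↦ false) P i 0 = vecCons false (fun k ↦ P k 0) i := by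
      cases i using Fin.cases <;> rfl
    simp only [hcol]
    exact exists_castSucc_eq_false_of_last_eq_true (by rw [← hcol, h.1])
  calc _ ≤ ∑ i, if i = i₀ then 0 else 1 := by
        refine (natDegree_prod_le _ _).trans (sum_le_sum fun i _ ↦ (natDegree_prod_le _ _).trans ?_)
        rw [Fin.sum_univ_succ, sum_eq_zero fun j _ ↦ h₂ i j _ _ _ _, add_zero]
        split_ifs with hi
        · subst hi
          rw [htop, hbot]
          exact (h₀ i _).le
        · exact h₁ i _ _ _ _
    _ = m := by simp [Finset.sum_ite, Finset.filter_ne']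

theorem sixVertexPartitionFn_of_vertexA_eq_zero {q p : R} (hqp : q * p = 1) {u v : Fin (n + 1) → R}
    {i : Fin (n + 1)} (h : vertexA (u i) (v 0) = 0) :
    sixVertexPartitionFn q p u v =
      (∏ j : Fin n, vertexB q p (u i) (v j.succ)) *
        ((∏ k, vertexB q p (u (i.succAbove k)) (v 0)) *
          sixVertexPartitionFn q p (fun k ↦ u (i.succAbove k)) fun j ↦ v j.succ) := by
  rw [← sixVertexPartitionFn_comp_perm hqp i.cycleRange.symm, sixVertexPartitionFn,
    partitionFn_sixVertexWeights_of_eq_zero _ _ _ (by simpa using h)]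
  simp [sixVertexPartitionFn]

end Freezing

section Izergin

open Polynomial Matrix

variable {R : Type*} [CommRing R] {n : ℕ}

theorem det_vandermonde_succ (v : Fin (n + 1) → R) :
    (vandermonde v).det = (∏ j : Fin n, (v j.succ - v 0)) * (vandermonde fun j ↦ v j.succ).det := by
  rw [det_vandermonde, det_vandermonde, Fin.prod_univ_succ, Fin.prod_Ioi_zero]
  simp only [Fin.prod_Ioi_succ]

theorem det_vandermonde_succAbove (u : Fin (n + 1) → R) (i : Fin (n + 1)) :
    (vandermonde u).det = (-1) ^ (i : ℕ) * (∏ k, (u (i.succAbove k) - u i)) *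
      (vandermonde fun k ↦ u (i.succAbove k)).det := by
  have hperm : (vandermonde (u ∘ i.cycleRange.symm)).det =
      (-1) ^ (i : ℕ) * (vandermonde u).det := by
    refine (det_permute i.cycleRange.symm (vandermonde u)).trans ?_
    simp [Fin.sign_cycleRange]
  rw [det_vandermonde_succ] at hperm
  simp only [Function.comp_apply, Fin.cycleRange_symm_succ, Fin.cycleRange_symm_zero] at hperm
  rw [mul_assoc, hperm, ← mul_assoc, ← mul_pow]
  simp

/-- The inverse of the entries of the determinant of Izergin. -/
def vertexAB (q p u v : R) : R := vertexA u v * vertexB q p u v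

/-- The determinant of Izergin as a polynomial in the spectral parameter `y` of the first column:
the remaining columns are those of `N`, and the denominators `vertexAB q p (u i) y` of the first
column are cleared by multiplication with `∏ i, vertexAB q p (u i) y`. -/
def clearedDet (q p : R) (u : Fin (n + 1) → R) (N : Matrix (Fin (n + 1)) (Fin n) R) (y : R) : R :=
  (Matrix.of fun i ↦ vecCons (∏ k, vertexAB q p (u (i.succAbove k)) y) (N i)).det

theorem clearedDet_eq_sum (q p : R) (u : Fin (n + 1) → R) (N : Matrix (Fin (n + 1)) (Fin n) R)
    (y : R) :
    clearedDet q p u N y = ∑ i : Fin (n + 1), (-1) ^ (i : ℕ) *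
      (∏ k, vertexAB q p (u (i.succAbove k)) y) * (N.submatrix i.succAbove id).det := by
  rw [clearedDet, det_succ_column_zero]
  rfl

theorem clearedDet_eq_prod_mul_det (q p : R) {u : Fin (n + 1) → R}
    (N : Matrix (Fin (n + 1)) (Fin n) R) {y : R} {m : Fin (n + 1) → R}
    (hm : ∀ i, m i * vertexAB q p (u i) y = 1) :
    clearedDet q p u N y =
      (∏ i, vertexAB q p (u i) y) * (Matrix.of fun i ↦ vecCons (m i) (N i)).det := by
  rw [clearedDet_eq_sum, det_succ_column_zero, mul_sum]
  refine sum_congr rfl fun i _ ↦ ?_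
  have hN : (Matrix.of fun i ↦ vecCons (m i) (N i)).submatrix i.succAbove Fin.succ =
      N.submatrix i.succAbove id := rfl
  rw [Fin.prod_univ_succAbove _ i, hN, of_apply, cons_val_zero]
  linear_combination -(-1) ^ (i : ℕ) * (∏ k, vertexAB q p (u (i.succAbove k)) y) *
    (N.submatrix i.succAbove id).det * hm i

theorem clearedDet_eq_zero (q p : R) {u : Fin (n + 1) → R} {w : Fin n → R}
    {N : Matrix (Fin (n + 1)) (Fin n) R} (hN : ∀ i j, N i j * vertexAB q p (u i) (w j) = 1)
    (j : Fin n) : clearedDet q p u N (w j) = 0 := by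
  rw [clearedDet_eq_prod_mul_det q p N fun i ↦ hN i j,
    det_zero_of_column_eq (Fin.succ_ne_zero j).symm fun i ↦ rfl, mul_zero]

theorem clearedDet_of_vertexAB_eq_zero (q p : R) {u : Fin (n + 1) → R}
    (N : Matrix (Fin (n + 1)) (Fin n) R) {y : R} {i : Fin (n + 1)}
    (h : vertexAB q p (u i) y = 0) :
    clearedDet q p u N y = (-1) ^ (i : ℕ) * (∏ k, vertexAB q p (u (i.succAbove k)) y) *
      (N.submatrix i.succAbove id).det := by
  rw [clearedDet_eq_sum]
  refine sum_eq_single i (fun l _ hl ↦ ?_) (by simp)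
  obtain ⟨k, hk⟩ := Fin.exists_succAbove_eq hl.symm
  rw [prod_eq_zero (mem_univ k) (by rw [hk, h]), mul_zero, zero_mul]

theorem map_clearedDet {S : Type*} [CommRing S] (f : R →+* S) (q p : R) (u : Fin (n + 1) → R)
    (N : Matrix (Fin (n + 1)) (Fin n) R) (y : R) :
    f (clearedDet q p u N y) = clearedDet (f q) (f p) (fun i ↦ f (u i)) (N.map f) (f y) := by
  simp [clearedDet_eq_sum, vertexAB, vertexA, vertexB, RingHom.map_det, submatrix_map]

theorem natDegree_clearedDet_le (q p : R) (u : Fin (n + 1) → R)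
    (N : Matrix (Fin (n + 1)) (Fin n) R) :
    (clearedDet (C q) (C p) (fun i ↦ C (u i)) (N.map C) X).natDegree ≤ 2 * n := by
  have hAB (x : R) : (vertexAB (C q) (C p) (C x) X).natDegree ≤ 2 := by
    rw [vertexAB, vertexA, vertexB]
    compute_degree
  rw [clearedDet_eq_sum]
  refine natDegree_sum_le_of_forall_le _ _ fun i _ ↦ ?_
  rw [submatrix_map, ← RingHom.mapMatrix_apply, ← RingHom.map_det, ← C_1, ← C_neg, ← C_pow]
  calc _ ≤ (∏ k, vertexAB (C q) (C p) (C (u (i.succAbove k))) X).natDegree :=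
        (natDegree_mul_C_le _ _).trans (natDegree_C_mul_le _ _)
    _ ≤ ∑ _k : Fin n, 2 := (natDegree_prod_le _ _).trans (sum_le_sum fun k _ ↦ hAB _)
    _ = 2 * n := by simp [mul_comm]

theorem natDegree_sixVertexPartitionFn_le (q p : R) (u : Fin (n + 1) → R) (w : Fin n → R) :
    (sixVertexPartitionFn (C q) (C p) (fun i ↦ C (u i)) (vecCons X fun j ↦ C (w j))).natDegree ≤
      n := by
  apply natDegree_partitionFn_le
  · intro i r
    cases r <;> simp [sixVertexWeights]
  · intro i l t r b
    simp only [cons_val_zero]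
    cases l <;> cases t <;> cases r <;> cases b <;>
      simp only [sixVertexWeights, vertexA, vertexB, vertexC] <;>
      compute_degree <;> decide
  · intro i j l t r b
    simp only [cons_val_succ, vertexA, vertexB, vertexC, ← C_1, ← C_mul, ← C_add, ← C_sub,
      ← map_sixVertexWeights, natDegree_C]

theorem eval_sixVertexPartitionFn (q p : R) (u : Fin (n + 1) → R) (w : Fin n → R) (x : R) :
    (sixVertexPartitionFn (C q) (C p) (fun i ↦ C (u i)) (vecCons X fun j ↦ C (w j))).eval x =
      sixVertexPartitionFn q p u (vecCons x w) := by
  have hcons : (fun j ↦ eval x (vecCons X (fun j ↦ C (w j)) j)) = vecCons x w := by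
    ext j
    cases j using Fin.cases <;> simp
  rw [← coe_evalRingHom, map_sixVertexPartitionFn]
  simp [hcons]

theorem eval_clearedDet (q p : R) (u : Fin (n + 1) → R) (N : Matrix (Fin (n + 1)) (Fin n) R)
    (x : R) :
    (clearedDet (C q) (C p) (fun i ↦ C (u i)) (N.map C) X).eval x = clearedDet q p u N x := by
  rw [← coe_evalRingHom, map_clearedDet]
  simp [Function.comp_def]

theorem injective_sumElim_one_sub [Nontrivial R] {q p : R} {u : Fin (n + 1) → R} {w : Fin n → R}
    (hu : Function.Injective u) (hw : Function.Injective w)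
    {N : Matrix (Fin (n + 1)) (Fin n) R} (hN : ∀ i j, N i j * vertexAB q p (u i) (w j) = 1) :
    Function.Injective (Sum.elim (fun i ↦ 1 - u i) w) := by
  refine Function.Injective.sumElim (fun i k h ↦ hu (sub_right_injective h)) hw fun i j h ↦ ?_
  have hij := hN i j
  simp [vertexAB, vertexA, ← h] at hij

/-- The spectral parameter `y = 1 - u i` freezes the vertex in row `i` and the first column, and
kills all terms but one in the expansion of the determinant. -/
theorem izergin_of_frozen {q p : R} (hqp : q * p = 1) {u : Fin (n + 1) → R} {w : Fin n → R}
    {N : Matrix (Fin (n + 1)) (Fin n) R} (i : Fin (n + 1))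
    (ih : sixVertexPartitionFn q p (fun k ↦ u (i.succAbove k)) w *
        ((vandermonde fun k ↦ u (i.succAbove k)).det * (vandermonde w).det) =
      (∏ k, ∏ j, vertexAB q p (u (i.succAbove k)) (w j)) * (N.submatrix i.succAbove id).det) :
    (∏ j, (w j - (1 - u i))) * sixVertexPartitionFn q p u (vecCons (1 - u i) w) *
        ((vandermonde u).det * (vandermonde w).det) =
      (∏ k, ∏ j, vertexAB q p (u k) (w j)) * clearedDet q p u N (1 - u i) := by
  have hA : vertexA (u i) (1 - u i) = 0 := by simp [vertexA]
  have hrow : (∏ j, (w j - (1 - u i))) * ∏ j, vertexB q p (u i) (w j) =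
      (-1) ^ n * ∏ j, vertexAB q p (u i) (w j) := by
    rw [← Fin.prod_const, ← prod_mul_distrib, ← prod_mul_distrib]
    exact prod_congr rfl fun j _ ↦ by rw [vertexAB, vertexA]; ring
  have hcol : ∏ k, vertexAB q p (u (i.succAbove k)) (1 - u i) = (-1) ^ n *
      ((∏ k, (u (i.succAbove k) - u i)) * ∏ k, vertexB q p (u (i.succAbove k)) (1 - u i)) := by
    rw [← Fin.prod_const, ← prod_mul_distrib, ← prod_mul_distrib]
    exact prod_congr rfl fun k _ ↦ by rw [vertexAB, vertexA]; ring
  rw [sixVertexPartitionFn_of_vertexA_eq_zero hqp (i := i) (by simpa using hA),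
    clearedDet_of_vertexAB_eq_zero q p N (by rw [vertexAB, hA, zero_mul]),
    det_vandermonde_succAbove u i, Fin.prod_univ_succAbove _ i]
  simp only [cons_val_zero, cons_val_succ]
  rw [hcol]
  set dk := ∏ k, (u (i.succAbove k) - u i)
  set Bk := ∏ k, vertexB q p (u (i.succAbove k)) (1 - u i)
  linear_combination (-1) ^ (i : ℕ) * dk * Bk * (sixVertexPartitionFn q p
    (fun k ↦ u (i.succAbove k)) w * (vandermonde fun k ↦ u (i.succAbove k)).det *
      (vandermonde w).det * hrow + (-1) ^ n * (∏ j, vertexAB q p (u i) (w j)) * ih)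

theorem izergin_succ [IsDomain R] {q p : R} (hqp : q * p = 1) {u : Fin (n + 1) → R}
    {w : Fin n → R} (hu : Function.Injective u) (hw : Function.Injective w)
    {N : Matrix (Fin (n + 1)) (Fin n) R} (hN : ∀ i j, N i j * vertexAB q p (u i) (w j) = 1)
    (ih : ∀ i : Fin (n + 1), sixVertexPartitionFn q p (fun k ↦ u (i.succAbove k)) w *
        ((vandermonde fun k ↦ u (i.succAbove k)).det * (vandermonde w).det) =
      (∏ k, ∏ j, vertexAB q p (u (i.succAbove k)) (w j)) * (N.submatrix i.succAbove id).det)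
    (y : R) :
    (∏ j, (w j - y)) * sixVertexPartitionFn q p u (vecCons y w) *
        ((vandermonde u).det * (vandermonde w).det) =
      (∏ i, ∏ j, vertexAB q p (u i) (w j)) * clearedDet q p u N y := by
  let F : R[X] := (∏ j, (C (w j) - X)) *
    sixVertexPartitionFn (C q) (C p) (fun i ↦ C (u i)) (vecCons X fun j ↦ C (w j)) *
      C ((vandermonde u).det * (vandermonde w).det)
  let G : R[X] := C (∏ i, ∏ j, vertexAB q p (u i) (w j)) *
    clearedDet (C q) (C p) (fun i ↦ C (u i)) (N.map C) X
  have evalF (x : R) : F.eval x = (∏ j, (w j - x)) * sixVertexPartitionFn q p u (vecCons x w) *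
      ((vandermonde u).det * (vandermonde w).det) := by
    simp only [F, eval_mul, eval_prod, eval_sub, eval_C, eval_X, eval_sixVertexPartitionFn]
  have evalG (x : R) : G.eval x =
      (∏ i, ∏ j, vertexAB q p (u i) (w j)) * clearedDet q p u N x := by
    simp only [G, eval_mul, eval_C, eval_clearedDet]
  have natDegree_F : F.natDegree ≤ 2 * n := by
    have hprod : (∏ j, (C (w j) - X)).natDegree ≤ ∑ _j : Fin n, 1 :=
      (natDegree_prod_le _ _).trans (sum_le_sum fun j _ ↦ by compute_degree)
    have := natDegree_sixVertexPartitionFn_le q p u w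
    refine (natDegree_mul_C_le _ _).trans (natDegree_mul_le.trans ?_)
    simp only [sum_const, card_univ, Fintype.card_fin, smul_eq_mul, mul_one] at hprod
    lia
  have natDegree_G : G.natDegree ≤ 2 * n :=
    (natDegree_C_mul_le _ _).trans (natDegree_clearedDet_le q p u N)
  have hnodes := injective_sumElim_one_sub hu hw hN
  have hcard : ((2 * n : ℕ) : WithBot ℕ) < #(univ : Finset (Fin (n + 1) ⊕ Fin n)) := by
    rw [card_univ, Fintype.card_sum, Fintype.card_fin, Fintype.card_fin, Nat.cast_lt]
    lia
  suffices F = G by rw [← evalF, this, evalG]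
  refine eq_of_degrees_lt_of_eval_index_eq univ hnodes.injOn
    ((degree_le_of_natDegree_le natDegree_F).trans_lt hcard)
    ((degree_le_of_natDegree_le natDegree_G).trans_lt hcard) ?_
  rintro (i | j) _
  · rw [Sum.elim_inl, evalF, evalG, izergin_of_frozen hqp i (ih i)]
  · rw [Sum.elim_inr, evalF, evalG, clearedDet_eq_zero q p hN, mul_zero,
      prod_eq_zero (mem_univ j) (sub_self _), zero_mul, zero_mul]

theorem sixVertexPartitionFn_mul_vandermonde [IsDomain R] {q p : R} (hqp : q * p = 1)
    {u v : Fin n → R} (hu : Function.Injective u) (hv : Function.Injective v)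
    {M : Matrix (Fin n) (Fin n) R} (hM : ∀ i j, M i j * vertexAB q p (u i) (v j) = 1) :
    sixVertexPartitionFn q p u v * ((vandermonde u).det * (vandermonde v).det) =
      (∏ i, ∏ j, vertexAB q p (u i) (v j)) * M.det := by
  induction n with
  | zero => simp [sixVertexPartitionFn, partitionFn, Matrix.one_apply, funext_iff]
  | succ n ih =>
    obtain ⟨y, w, rfl⟩ : ∃ y w, v = vecCons y w := ⟨_, _, (cons_head_tail v).symm⟩
    have hw : Function.Injective w := (Fin.cons_injective_iff.mp hv).2
    have hN (i : Fin (n + 1)) (j : Fin n) : M i j.succ * vertexAB q p (u i) (w j) = 1 := hM i j.succ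
    have izergin := izergin_succ hqp hu hw (N := M.submatrix id Fin.succ) hN
      (fun i ↦ ih (hu.comp Fin.succAbove_right_injective) hw fun k j ↦ hN _ j) y
    have hdet : clearedDet q p u (M.submatrix id Fin.succ) y =
        (∏ i, vertexAB q p (u i) y) * M.det := by
      rw [clearedDet_eq_prod_mul_det q p _ (y := y) fun i ↦ hM i 0]
      congr 2
      ext i j
      cases j using Fin.cases <;> rfl
    have hprod : ∏ i, ∏ j, vertexAB q p (u i) (vecCons y w j) =
        (∏ i, vertexAB q p (u i) y) * ∏ i, ∏ j, vertexAB q p (u i) (w j) := by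
      rw [← prod_mul_distrib]
      exact prod_congr rfl fun i _ ↦ Fin.prod_univ_succ _
    rw [hdet] at izergin
    rw [det_vandermonde_succ (vecCons y w), hprod]
    simp only [cons_val_zero, cons_val_succ]
    linear_combination izergin

end Izergin

section AltGeomSum

variable {R : Type*} [CommRing R]

/-- The alternating geometric sums `a_m(q)`, for `q` invertible and `m` of either sign. -/
def altGeomSum (q : Rˣ) : ℤ → R
  | .ofNat m => ∑ l ∈ range m, (-(q : R)) ^ l
  | .negSucc m => -∑ l ∈ range (m + 1), (-(↑q⁻¹ : R)) ^ (l + 1)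

theorem one_add_mul_altGeomSum (q : Rˣ) (m : ℤ) :
    (1 + (q : R)) * altGeomSum q m = 1 - ((-q) ^ m : Rˣ) := by
  cases m with
  | ofNat m => simpa [altGeomSum] using mul_neg_geom_sum (-(q : R)) m
  | negSucc m =>
    have hq : (q : R) * ↑q⁻¹ = 1 := q.mul_inv
    have hgeom := mul_neg_geom_sum (-(↑q⁻¹ : R)) (m + 1)
    have hpow : (((-q) ^ (Int.negSucc m) : Rˣ) : R) = (-(↑q⁻¹ : R)) ^ (m + 1) := by
      rw [zpow_negSucc, ← inv_pow, inv_neg, Units.val_pow_eq_pow_val, Units.val_neg]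
    simp only [altGeomSum, pow_succ, ← sum_mul] at hgeom ⊢
    rw [hpow, pow_succ]
    linear_combination hgeom + (∑ l ∈ range (m + 1), (-(↑q⁻¹ : R)) ^ l) * hq

theorem altGeomSum_mk0 {K : Type*} [Field K] {q : K} (hq0 : q ≠ 0) (hq : 1 + q ≠ 0) (m : ℤ) :
    altGeomSum (Units.mk0 q hq0) m = (1 - (-q) ^ m) / (1 + q) := by
  rw [eq_div_iff hq, mul_comm]
  simpa only [Units.val_zpow_eq_zpow_val, Units.val_neg, Units.val_mk0] using
    one_add_mul_altGeomSum (Units.mk0 q hq0) m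

theorem map_altGeomSum {S : Type*} [CommRing S] (f : R →+* S) (q : Rˣ) (m : ℤ) :
    f (altGeomSum q m) = altGeomSum (Units.map f q) m := by
  cases m <;> simp [altGeomSum]

/-- The entries of the matrix `D_{n,1}(0, q)`, with rows and columns indexed from `0`. -/
def latticeCoeff (q : Rˣ) (a b : ℕ) : R :=
  (a + b).choose b * altGeomSum q (b - a + 1)

theorem one_add_mul_latticeCoeff (q : Rˣ) (a b : ℕ) :
    (1 + (q : R)) * latticeCoeff q a b =
      (a + b).choose b * (1 + q * (-(↑q⁻¹ : R)) ^ a * (-(q : R)) ^ b) := by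
  have hpow : (-q) ^ ((b : ℤ) - a + 1) = -q * (-q⁻¹) ^ a * (-q) ^ b := by
    rw [← inv_neg, sub_add_eq_add_sub, zpow_sub, zpow_add_one, zpow_natCast, zpow_natCast, inv_pow,
      mul_comm, mul_comm _ (-q), mul_left_comm, mul_assoc]
  rw [latticeCoeff, mul_left_comm, one_add_mul_altGeomSum, hpow]
  push_cast
  ring

end AltGeomSum

section HomogeneousLimit

open Matrix PowerSeries

variable {K : Type*} [Field K] {n : ℕ}

theorem sum_inv_vandermonde_mul_pow {γ : Fin n → K} (hγ : Function.Injective γ) (a : Fin n)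
    {m : ℕ} (hm : m ≤ a) :
    ∑ i, (vandermonde γ)⁻¹ a i * γ i ^ m = if m = a then 1 else 0 := by
  have hinv := nonsing_inv_mul (vandermonde γ) (det_vandermonde_ne_zero_iff.mpr hγ).isUnit
  have happly := congr_fun₂ hinv a ⟨m, hm.trans_lt a.2⟩
  simpa [mul_apply, one_apply, Fin.ext_iff, eq_comm] using happly

/-- The power series `∑ c a b * (x X) ^ a * (y X) ^ b`: the generating function of `c`, restricted
to the line through the origin in the direction `(x, y)`. -/
def lineSeries (c : ℕ → ℕ → K) (x y : K) : K⟦X⟧ :=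
  PowerSeries.mk fun k ↦ ∑ m ∈ antidiagonal k, c m.1 m.2 * x ^ m.1 * y ^ m.2

/-- Divided differences, in both variables, of a matrix of values of a generating function. -/
def dividedDifferences (c : ℕ → ℕ → K) (α β : Fin n → K) : Matrix (Fin n) (Fin n) K⟦X⟧ :=
  C.mapMatrix (vandermonde α)⁻¹ * (of fun i j ↦ lineSeries c (α i) (β j)) *
    (C.mapMatrix (vandermonde β)⁻¹)ᵀ

theorem coeff_dividedDifferences (c : ℕ → ℕ → K) (α β : Fin n → K) (a b : Fin n) (k : ℕ) :
    coeff k (dividedDifferences c α β a b) = ∑ m ∈ antidiagonal k, c m.1 m.2 *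
      (∑ i, (vandermonde α)⁻¹ a i * α i ^ m.1) * (∑ j, (vandermonde β)⁻¹ b j * β j ^ m.2) := by
  simp only [dividedDifferences, lineSeries, mul_apply, RingHom.mapMatrix_apply, map_apply,
    transpose_apply, of_apply, map_sum, sum_mul, coeff_mul_C, coeff_C_mul, coeff_mk, mul_sum]
  rw [sum_congr rfl fun j _ ↦ sum_comm, sum_comm]
  exact sum_congr rfl fun m _ ↦ sum_congr rfl fun j _ ↦ sum_congr rfl fun i _ ↦ by ring

theorem coeff_dividedDifferences_of_le (c : ℕ → ℕ → K) {α β : Fin n → K}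
    (hα : Function.Injective α) (hβ : Function.Injective β) {a b : Fin n} {k : ℕ}
    (hk : k ≤ a + b) :
    coeff k (dividedDifferences c α β a b) = if k = a + b then c a b else 0 := by
  have hterm (m : ℕ × ℕ) (hm : m ∈ antidiagonal k) :
      c m.1 m.2 * (∑ i, (vandermonde α)⁻¹ a i * α i ^ m.1) *
        (∑ j, (vandermonde β)⁻¹ b j * β j ^ m.2) =
      if m = ((a : ℕ), (b : ℕ)) then c a b else 0 := by
    obtain ⟨i, j⟩ := m
    rw [HasAntidiagonal.mem_antidiagonal] at hm
    simp only [Prod.mk.injEq]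
    rcases lt_trichotomy i a with h | rfl | h
    · rw [sum_inv_vandermonde_mul_pow hα a h.le, if_neg h.ne, if_neg (by lia), mul_zero, zero_mul]
    · rw [sum_inv_vandermonde_mul_pow hα a le_rfl, sum_inv_vandermonde_mul_pow hβ b (by lia)]
      by_cases hj : j = b <;> simp [hj]
    · rw [sum_inv_vandermonde_mul_pow hβ b (by lia), if_neg (by lia), if_neg (by lia), mul_zero]
  rw [coeff_dividedDifferences, sum_congr rfl hterm, sum_ite_eq']
  simp only [HasAntidiagonal.mem_antidiagonal, eq_comm]

theorem det_vandermonde_C_mul_X (γ : Fin n → K) :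
    (vandermonde fun i ↦ C (γ i) * X).det =
      C (vandermonde γ).det * ∏ a : Fin n, (X : K⟦X⟧) ^ (a : ℕ) := by
  have hV : vandermonde (fun i ↦ C (γ i) * X) =
      of fun i j : Fin n ↦ (X : K⟦X⟧) ^ (j : ℕ) * C.mapMatrix (vandermonde γ) i j := by
    ext1 i j
    simp [vandermonde_apply, mul_pow, mul_comm]
  rw [hV, det_mul_row, RingHom.map_det, mul_comm]

theorem exists_det_dividedDifferences_eq (c : ℕ → ℕ → K) {α β : Fin n → K}
    (hα : Function.Injective α) (hβ : Function.Injective β) :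
    ∃ g : K⟦X⟧, (dividedDifferences c α β).det =
        (∏ a : Fin n, X ^ (a : ℕ)) * (∏ b : Fin n, X ^ (b : ℕ)) * g ∧
      constantCoeff g = (of fun a b : Fin n ↦ c a b).det := by
  have hdvd (a b : Fin n) : (X : K⟦X⟧) ^ ((a : ℕ) + b) ∣ dividedDifferences c α β a b :=
    X_pow_dvd_iff.mpr fun k hk ↦ by
      rw [coeff_dividedDifferences_of_le c hα hβ hk.le, if_neg hk.ne]
  choose G hG using hdvd
  refine ⟨(of G).det, ?_, ?_⟩
  · have hH : dividedDifferences c α β = of fun a b : Fin n ↦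
        X ^ (a : ℕ) * (of fun a b : Fin n ↦ X ^ (b : ℕ) * (of G) a b) a b := by
      ext1 a b
      rw [hG, of_apply, of_apply, of_apply, pow_add, mul_assoc]
    rw [hH, det_mul_column, det_mul_row fun b : Fin n ↦ (X : K⟦X⟧) ^ (b : ℕ), mul_assoc]
  · rw [RingHom.map_det]
    congr 1
    ext a b
    have hab := coeff_dividedDifferences_of_le c hα hβ (a := a) (b := b) le_rfl
    rw [hG, if_pos rfl, coeff_X_pow_mul'] at hab
    simpa using hab

theorem exists_det_lineSeries_eq (c : ℕ → ℕ → K) {α β : Fin n → K}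
    (hα : Function.Injective α) (hβ : Function.Injective β) :
    ∃ g : K⟦X⟧, (of fun i j ↦ lineSeries c (α i) (β j)).det =
        (vandermonde fun i ↦ C (α i) * X).det * (vandermonde fun j ↦ C (β j) * X).det * g ∧
      constantCoeff g = (of fun a b : Fin n ↦ c a b).det := by
  obtain ⟨g, hdet, hg⟩ := exists_det_dividedDifferences_eq c hα hβ
  refine ⟨g, ?_, hg⟩
  have hinv {γ : Fin n → K} (hγ : Function.Injective γ) :
      C (vandermonde γ).det * (C.mapMatrix (vandermonde γ)⁻¹).det = (1 : K⟦X⟧) := by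
    rw [← RingHom.map_det, ← map_mul, ← det_mul,
      mul_nonsing_inv _ (det_vandermonde_ne_zero_iff.mpr hγ).isUnit, det_one, map_one]
  rw [dividedDifferences, det_mul, det_mul, det_transpose] at hdet
  rw [det_vandermonde_C_mul_X, det_vandermonde_C_mul_X]
  set F := (of fun i j ↦ lineSeries c (α i) (β j)).det
  linear_combination C (vandermonde α).det * C (vandermonde β).det * hdet - F * hinv hα -
    F * C (vandermonde α).det * (C.mapMatrix (vandermonde α)⁻¹).det * hinv hβ

theorem rescale_mk_one_mul_one_sub (x : K) : rescale x (PowerSeries.mk 1) * (1 - C x * X) = 1 := by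
  have := congr_arg (rescale x) (mk_one_mul_one_sub_eq_one K)
  rwa [map_mul, map_sub, map_one, rescale_X] at this

theorem one_add_mul_lineSeries_latticeCoeff (q : Kˣ) (x y : K) :
    C (1 + (q : K)) * lineSeries (latticeCoeff q) x y =
      rescale (x + y) (PowerSeries.mk 1) +
        C (q : K) * rescale (-(↑q⁻¹ : K) * x + -(q : K) * y) (PowerSeries.mk 1) := by
  ext k
  rw [lineSeries, coeff_C_mul, map_add (coeff k), coeff_C_mul]
  simp only [coeff_mk, coeff_rescale, Pi.one_apply, mul_one]
  rw [(Commute.all x y).add_pow', (Commute.all (-(↑q⁻¹ : K) * x) (-(q : K) * y)).add_pow',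
    mul_sum, mul_sum, ← sum_add_distrib]
  refine sum_congr rfl fun m hm ↦ ?_
  rw [← HasAntidiagonal.mem_antidiagonal.mp hm, Nat.choose_symm_add]
  simp only [nsmul_eq_mul, mul_pow]
  linear_combination x ^ m.1 * y ^ m.2 * one_add_mul_latticeCoeff q m.1 m.2

theorem lineSeries_latticeCoeff_mul_vertexAB {q : Kˣ} (hq : 1 + (q : K) ≠ 0) (x y : K) :
    lineSeries (latticeCoeff q) x y * vertexAB (C (q : K)) (C ↑q⁻¹) (C x * X) (C y * X) =
      1 + C ((↑q⁻¹ - 1) * x) * X := by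
  have hgeom₁ := rescale_mk_one_mul_one_sub (x + y)
  have hgeom₂ := rescale_mk_one_mul_one_sub (-(↑q⁻¹ : K) * x + -(q : K) * y)
  have hline := one_add_mul_lineSeries_latticeCoeff q x y
  have hinv : C (q : K) * C (↑q⁻¹ : K) = (1 : K⟦X⟧) := by rw [← map_mul, q.mul_inv, map_one]
  have hC : C (1 + (q : K)) ≠ (0 : K⟦X⟧) := (map_ne_zero_iff C C_injective).mpr hq
  apply mul_left_cancel₀ hC
  rw [← mul_assoc, hline, vertexAB, vertexA, vertexB]
  simp only [map_add, map_sub, map_mul, map_neg, map_one] at hgeom₁ hgeom₂ ⊢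
  linear_combination (1 + C ↑q⁻¹ * (C x * X) + C (q : K) * (C y * X)) * hgeom₁ +
    C (q : K) * (1 - C x * X - C y * X) * hgeom₂ - C x * X * hinv

theorem C_mul_X_injective {α : Fin n → K} (hα : Function.Injective α) :
    Function.Injective fun i ↦ C (α i) * X :=
  fun i j h ↦ hα <| by simpa using congr_arg (coeff 1) h

theorem prod_vertexAB_mul_det_lineSeries {q : Kˣ} (hq : 1 + (q : K) ≠ 0) {α β : Fin n → K}
    (hα : Function.Injective α) (hβ : Function.Injective β) :
    let u i := C (α i) * X
    let v j := C (β j) * X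
    (∏ i, ∏ j, vertexAB (C (q : K)) (C ↑q⁻¹) (u i) (v j)) *
        (of fun i j ↦ lineSeries (latticeCoeff q) (α i) (β j)).det =
      (∏ i, (1 + C ((↑q⁻¹ - 1) * α i) * X)) * sixVertexPartitionFn (C (q : K)) (C ↑q⁻¹) u v *
        ((vandermonde u).det * (vandermonde v).det) := by
  intro u v
  let AB (i j : Fin n) : K⟦X⟧ := vertexAB (C (q : K)) (C ↑q⁻¹) (u i) (v j)
  have hinv (i j : Fin n) : (AB i j)⁻¹ * AB i j = 1 :=
    PowerSeries.inv_mul_cancel _ (by simp [AB, u, v, vertexAB, vertexA, vertexB])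
  have izergin := sixVertexPartitionFn_mul_vandermonde (M := of fun i j ↦ (AB i j)⁻¹)
    (by rw [← map_mul, q.mul_inv, map_one]) (C_mul_X_injective hα) (C_mul_X_injective hβ) hinv
  have hline : (of fun i j ↦ lineSeries (latticeCoeff q) (α i) (β j)) =
      of fun i j ↦ (1 + C ((↑q⁻¹ - 1) * α i) * X) * (of fun i j ↦ (AB i j)⁻¹) i j := by
    ext1 i j
    rw [of_apply, of_apply, of_apply, ← lineSeries_latticeCoeff_mul_vertexAB hq (α i) (β j),
      mul_assoc, mul_comm (vertexAB _ _ _ _), hinv, mul_one]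
  rw [hline, det_mul_column]
  linear_combination -(∏ i, (1 + C ((↑q⁻¹ - 1) * α i) * X)) * izergin

theorem sixVertexPartitionFn_zero_of_infinite [Infinite K] {q : Kˣ} (hq : 1 + (q : K) ≠ 0) :
    sixVertexPartitionFn (q : K) ↑q⁻¹ (fun _ : Fin n ↦ 0) (fun _ : Fin n ↦ 0) =
      (of fun a b : Fin n ↦ latticeCoeff q a b).det := by
  obtain ⟨α, hα⟩ : ∃ α : Fin n → K, Function.Injective α :=
    ⟨_, (Infinite.natEmbedding K).injective.comp Fin.val_injective⟩
  obtain ⟨g, hdet, hg⟩ := exists_det_lineSeries_eq (latticeCoeff q) hα hα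
  let u (i : Fin n) : K⟦X⟧ := C (α i) * X
  have hZ : (∏ i, (1 + C ((↑q⁻¹ - 1) * α i) * X)) * sixVertexPartitionFn (C (q : K)) (C ↑q⁻¹) u u =
      (∏ i, ∏ j, vertexAB (C (q : K)) (C ↑q⁻¹) (u i) (u j)) * g := by
    have hV : (vandermonde u).det ≠ 0 := det_vandermonde_ne_zero_iff.mpr (C_mul_X_injective hα)
    apply mul_right_cancel₀ (mul_ne_zero hV hV)
    rw [← prod_vertexAB_mul_det_lineSeries hq hα hα, hdet]
    ring
  simpa [map_sixVertexPartitionFn, u, vertexAB, vertexA, vertexB, hg] using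
    congr_arg constantCoeff hZ

end HomogeneousLimit

section Enumeration

variable {R : Type*} [CommRing R] {n : ℕ}

theorem eq_of_sum_Iic_eq {ι M : Type*} [PartialOrder ι] [LocallyFiniteOrderBot ι]
    [WellFoundedLT ι] [AddCommMonoid M] [IsCancelAdd M] {f g : ι → M}
    (h : ∀ i, ∑ k ∈ Iic i, f k = ∑ k ∈ Iic i, g k) : f = g := by
  funext i
  induction i using WellFoundedLT.induction with
  | ind i ih =>
    have hi := h i
    rw [Iic_eq_cons_Iio, sum_cons, sum_cons, sum_congr rfl fun k hk ↦ ih k (mem_Iio.mp hk)] at hi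
    exact add_right_cancel hi

/-- The differences of consecutive terms of the sequence `f` of bits, preceded by `false` and read
as integers. They are the entries along a line of an alternating sign matrix, if `f` is the sequence
of edge states along this line. -/
def bitDiff (f : Fin n → Bool) (i : Fin n) : ℤ :=
  (f i).toInt - (vecCons false f i.castSucc).toInt

theorem sum_Iic_bitDiff (f : Fin n → Bool) (i : Fin n) :
    ∑ k ∈ Iic i, bitDiff f k = (f i).toInt := by
  simpa [bitDiff] using Fin.sum_Iic_sub i fun k ↦ (vecCons false f k).toInt

theorem sum_bitDiff (f : Fin n → Bool) :
    ∑ k, bitDiff f k = (vecCons false f (Fin.last n)).toInt := by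
  cases n with
  | zero => rfl
  | succ n =>
    rw [← Iic_top, sum_Iic_bitDiff, ← Fin.succ_last, Matrix.cons_val_succ, Fin.top_eq_last]

theorem bitDiff_injective : Function.Injective (bitDiff : (Fin n → Bool) → Fin n → ℤ) := by
  intro f g h
  funext i
  have hi : (f i).toInt = (g i).toInt := by rw [← sum_Iic_bitDiff f, h, sum_Iic_bitDiff]
  revert hi
  cases f i <;> cases g i <;> decide

theorem bitDiff_eq_neg_one_or (f : Fin n → Bool) (i : Fin n) :
    bitDiff f i = -1 ∨ bitDiff f i = 0 ∨ bitDiff f i = 1 := by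
  rw [bitDiff]
  cases f i <;> cases vecCons false f i.castSucc <;> decide

theorem exists_bitDiff_eq_iff {d : Fin n → ℤ} :
    (∃ f, vecCons false f (Fin.last n) = true ∧ bitDiff f = d) ↔
      ∑ k, d k = 1 ∧ ∀ i, ∑ k ∈ Iic i, d k = 0 ∨ ∑ k ∈ Iic i, d k = 1 := by
  constructor
  · rintro ⟨f, hf, rfl⟩
    refine ⟨by rw [sum_bitDiff, hf]; rfl, fun i ↦ ?_⟩
    rw [sum_Iic_bitDiff]
    cases f i <;> decide
  · rintro ⟨hsum, hpartial⟩
    obtain ⟨f, rfl⟩ : ∃ f, bitDiff f = d := by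
      refine ⟨fun i ↦ decide (∑ k ∈ Iic i, d k = 1), eq_of_sum_Iic_eq fun i ↦ ?_⟩
      rw [sum_Iic_bitDiff]
      rcases hpartial i with h | h <;> rw [h] <;> rfl
    refine ⟨f, ?_, rfl⟩
    rw [sum_bitDiff] at hsum
    revert hsum
    cases vecCons false f (Fin.last n) <;> decide

theorem isASM_iff_exists_bitDiff {A : Matrix (Fin n) (Fin n) ℤ} :
    IsASM A ↔ (∀ i, ∃ f, vecCons false f (Fin.last n) = true ∧ bitDiff f = A i) ∧
      ∀ j, ∃ f, vecCons false f (Fin.last n) = true ∧ bitDiff f = fun i ↦ A i j := by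
  simp only [exists_bitDiff_eq_iff, forall_and, IsASM]
  refine ⟨fun ⟨_, hr, hc, hr', hc'⟩ ↦ ⟨⟨hr, hr'⟩, hc, fun j i ↦ hc' i j⟩,
    fun ⟨⟨hr, hr'⟩, hc, hc'⟩ ↦ ⟨fun i ↦ ?_, hr, hc, hr', fun i j ↦ hc' j i⟩⟩
  obtain ⟨f, -, hf⟩ := exists_bitDiff_eq_iff.mpr ⟨hr i, hr' i⟩
  rw [← hf]
  exact bitDiff_eq_neg_one_or f

theorem mem_asmFinset {A : Matrix (Fin n) (Fin n) ℤ} : A ∈ asmFinset n ↔ IsASM A := by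
  simp only [asmFinset, mem_filter, mem_image, mem_univ, true_and, and_iff_right_iff_imp]
  intro hA
  have hentry (i j : Fin n) : ∃ b : Fin 3, ((b : ℕ) : ℤ) - 1 = A i j := by
    rcases hA.1 i j with h | h | h <;> rw [h]
    exacts [⟨0, rfl⟩, ⟨1, rfl⟩, ⟨2, rfl⟩]
  choose B hB using hentry
  exact ⟨B, Matrix.ext hB⟩

theorem pow_asmMu (Q : R) (A : Matrix (Fin n) (Fin n) ℤ) :
    Q ^ asmMu A = ∏ i, ∏ j, if A i j = -1 then Q else 1 := by
  rw [← Fintype.prod_prod_type' fun i j ↦ if A i j = -1 then Q else 1, prod_ite]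
  simp [asmMu]

theorem map_asmEnum {S : Type*} [CommRing S] (f : R →+* S) (n : ℕ) (Q : R) :
    f (asmEnum n Q) = asmEnum n (f Q) := by
  simp only [asmEnum, map_sum, map_pow]

theorem sixVertexWeights_one_one (Q : R) (l t r b : Bool) :
    sixVertexWeights 1 1 Q l t r b =
      if r.toInt - l.toInt = b.toInt - t.toInt then
        if r.toInt - l.toInt = -1 then Q else 1
      else 0 := by
  cases l <;> cases t <;> cases r <;> cases b <;> simp [sixVertexWeights]

/-- The bit sequences `P` and `H` are the states of the vertical and the horizontal edges of a
configuration of the six-vertex model with domain wall boundary conditions. -/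
def IsConfiguration (P H : Fin n → Fin n → Bool) : Prop :=
  (∀ j, vecCons false (fun i ↦ P i j) (Fin.last n) = true) ∧
    (∀ i, vecCons false (H i) (Fin.last n) = true) ∧
    ∀ i j, bitDiff (H i) j = bitDiff (fun i ↦ P i j) i

open scoped Classical in
theorem partitionFn_sixVertexWeights_one_one (Q : R) (n : ℕ) :
    partitionFn (fun _ _ : Fin n ↦ sixVertexWeights 1 1 Q) =
      ∑ P : Fin n → Fin n → Bool, ∑ H : Fin n → Fin n → Bool,
        if IsConfiguration P H then Q ^ asmMu (Matrix.of fun i ↦ bitDiff (H i)) else 0 := by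
  rw [partitionFn_eq_sum]
  refine sum_congr rfl fun P _ ↦ sum_congr rfl fun H _ ↦ ?_
  have hcol (k : Fin (n + 1)) (j : Fin n) :
      vecCons (fun _ ↦ false) P k j = vecCons false (fun i ↦ P i j) k := by
    cases k using Fin.cases <;> rfl
  simp only [IsConfiguration, funext_iff, hcol, sixVertexWeights_one_one, prod_ite_zero, mem_univ,
    true_imp_iff, bitDiff, pow_asmMu, Matrix.of_apply, ite_and]
  split_ifs <;> rfl

theorem asmEnum_eq_partitionFn (Q : R) (n : ℕ) :
    asmEnum n Q = partitionFn fun _ _ : Fin n ↦ sixVertexWeights 1 1 Q := by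
  classical
  rw [partitionFn_sixVertexWeights_one_one, ← Fintype.sum_prod_type', ← sum_filter, asmEnum]
  symm
  refine sum_nbij (fun x ↦ .of fun i ↦ bitDiff (x.2 i)) ?_ ?_ ?_ fun _ _ ↦ rfl
  · rintro ⟨P, H⟩ hPH
    obtain ⟨hP, hH, hdiff⟩ := (mem_filter.mp hPH).2
    exact mem_asmFinset.mpr <| isASM_iff_exists_bitDiff.mpr
      ⟨fun i ↦ ⟨H i, hH i, rfl⟩, fun j ↦ ⟨_, hP j, funext fun i ↦ (hdiff i j).symm⟩⟩
  · rintro ⟨P, H⟩ hPH ⟨P', H'⟩ hPH' h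
    obtain ⟨-, -, hdiff⟩ := (mem_filter.mp hPH).2
    obtain ⟨-, -, hdiff'⟩ := (mem_filter.mp hPH').2
    have hH (i : Fin n) : bitDiff (H i) = bitDiff (H' i) := congr_fun h i
    have hP (j : Fin n) : (fun i ↦ P i j) = fun i ↦ P' i j :=
      bitDiff_injective <| funext fun i ↦ by rw [← hdiff, hH, hdiff']
    exact Prod.ext (funext₂ fun i j ↦ congr_fun (hP j) i) (funext fun i ↦ bitDiff_injective (hH i))
  · intro A hA
    obtain ⟨hrow, hcol⟩ := isASM_iff_exists_bitDiff.mp (mem_asmFinset.mp hA)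
    choose H hH hHA using hrow
    choose P hP hPA using hcol
    refine ⟨(fun i j ↦ P j i, H), mem_filter.mpr ⟨mem_univ _, hP, hH, fun i j ↦ ?_⟩, funext hHA⟩
    rw [hHA, hPA]

theorem asmEnum_eq_sixVertexPartitionFn (q p : R) (n : ℕ) :
    asmEnum n ((1 + p) * q * (1 + p)) =
      sixVertexPartitionFn q p (fun _ : Fin n ↦ 0) (fun _ : Fin n ↦ 0) := by
  simp [asmEnum_eq_partitionFn, sixVertexPartitionFn, vertexA, vertexB, vertexC]

end Enumeration

section Specialization

open Matrix

theorem two_add_add_inv {R : Type*} [CommRing R] (q : Rˣ) :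
    2 + (q : R) + ↑q⁻¹ = (1 + ↑q⁻¹) * q * (1 + ↑q⁻¹) := by
  linear_combination -(2 + (↑q⁻¹ : R)) * q.mul_inv

theorem asmEnum_of_infinite {K : Type*} [Field K] [Infinite K] (n : ℕ) {q : Kˣ}
    (hq : 1 + (q : K) ≠ 0) :
    asmEnum n (2 + (q : K) + ↑q⁻¹) = (of fun a b : Fin n ↦ latticeCoeff q a b).det := by
  rw [two_add_add_inv, asmEnum_eq_sixVertexPartitionFn, sixVertexPartitionFn_zero_of_infinite hq]

theorem map_asmEnum_two_add_add_inv {R S : Type*} [CommRing R] [CommRing S] (f : R →+* S) (n : ℕ)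
    (q : Rˣ) :
    f (asmEnum n (2 + (q : R) + ↑q⁻¹)) =
      asmEnum n (2 + (Units.map (f : R →* S) q : S) + ↑(Units.map (f : R →* S) q)⁻¹) := by
  rw [map_asmEnum, map_add, map_add, map_ofNat]
  rfl

theorem map_det_latticeCoeff {R S : Type*} [CommRing R] [CommRing S] (f : R →+* S) (n : ℕ)
    (q : Rˣ) :
    f (of fun a b : Fin n ↦ latticeCoeff q a b).det =
      (of fun a b : Fin n ↦ latticeCoeff (Units.map f q) a b).det := by
  rw [RingHom.map_det]
  congr 1
  ext a b
  simp [latticeCoeff, map_altGeomSum]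

open LaurentPolynomial in
/-- The variable of `ℤ[T;T⁻¹]` as a unit: the generic value of `q`. -/
def laurentVar : ℤ[T;T⁻¹]ˣ where
  val := T 1
  inv := T (-1)
  val_inv := by rw [← T_add, add_neg_cancel, T_zero]
  inv_val := by rw [← T_add, neg_add_cancel, T_zero]

open LaurentPolynomial in
theorem asmEnum_laurentVar (n : ℕ) :
    asmEnum n (2 + (laurentVar : ℤ[T;T⁻¹]) + ↑laurentVar⁻¹) =
      (of fun a b : Fin n ↦ latticeCoeff laurentVar a b).det := by
  let f := algebraMap ℤ[T;T⁻¹] (FractionRing ℤ[T;T⁻¹])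
  have hf : Function.Injective f := IsFractionRing.injective _ _
  have : Infinite (FractionRing ℤ[T;T⁻¹]) :=
    .of_injective _ (hf.comp Polynomial.toLaurent_injective)
  have hT : 1 + (laurentVar : ℤ[T;T⁻¹]) ≠ 0 := fun h ↦ by
    simpa [laurentVar] using congr_arg (eval₂ (RingHom.id ℤ) 1) h
  apply hf
  rw [map_det_latticeCoeff, map_asmEnum_two_add_add_inv]
  exact asmEnum_of_infinite n fun h ↦ hT (hf (by simpa using h))

theorem statement0_general {R : Type*} [CommRing R] (n : ℕ) (q : Rˣ) :
    asmEnum n (2 + (q : R) + ↑q⁻¹) =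
      (of fun i j : Fin n ↦ ((i + j : ℕ).choose j : R) * altGeomSum q (j - i + 1)).det := by
  let f := LaurentPolynomial.eval₂ (Int.castRingHom R) q
  have hq : Units.map f laurentVar = q := Units.ext (by simp [laurentVar, f])
  have heval := congr_arg f (asmEnum_laurentVar n)
  rwa [map_asmEnum_two_add_add_inv, map_det_latticeCoeff, hq] at heval

end Specialization

/-- For every positive integer n and every q ∈ ℂ with q ≠ 0, q ≠ -1, the
(2+q+q⁻¹)-enumeration of alternating sign matrices of size n equals
det_{1≤i,j≤n}( binom(i+j-2, j-1)·(1-(-q)^{j-i+1})/(1+q) ). -/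
theorem statement0 (n : ℕ) (hn : 1 ≤ n) (q : ℂ) (hq0 : q ≠ 0) (hq1 : q ≠ -1) :
    asmEnum n (2 + q + q⁻¹) =
      Matrix.det (Matrix.of fun i j : Fin n =>
        ((((i : ℕ) + (j : ℕ)).choose (j : ℕ) : ℂ) *
          (1 - (-q) ^ ((j : ℤ) - (i : ℤ) + 1))) / (1 + q)) := by
  have hq : 1 + q ≠ 0 := fun h ↦ hq1 (eq_neg_of_add_eq_zero_right h)
  simpa only [altGeomSum_mk0 hq0 hq, ← mul_div_assoc, Units.val_inv_eq_inv_val, Units.val_mk0] using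
    statement0_general n (Units.mk0 q hq0)

end
end

section
/- Let n ≥ 2 and k be integers. The following identities hold in ℚ[x][q,q⁻¹]: (i) the determinant of the matrix obtained from D_{n,k}(x,q) by deleting the first row and the first column equals binom(x+n, n−1)·d_{n−1,k}(x+2,q); (ii) deleting the last row and the last column gives d_{n−1,k}(x,q); (iii) for n ≥ 2, deleting the first and last rows and the first and last columns gives binom(x+n−1, n−2)·d_{n−2,k}(x+2,q); (iv) deleting the first row and the last column gives d_{n−1,k−1}(x+1,q); (v) deleting the last row and the first column gives binom(x+n−1, n−1)·d_{n−1,k+1}(x+1,q). -/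
open Polynomial LaurentPolynomial Finset

noncomputable section

/-- The ring ℚ[x][q,q⁻¹]: Laurent polynomials in `q` over ℚ[x]. -/
abbrev RQ : Type := LaurentPolynomial (Polynomial ℚ)

/-- The polynomial binomial coefficient binom(y, m) = y(y-1)⋯(y-m+1)/m!. -/
noncomputable def binomQ (y : Polynomial ℚ) (m : ℕ) : Polynomial ℚ :=
  Polynomial.C ((m.factorial : ℚ))⁻¹ * ∏ t ∈ Finset.range m, (y - (t : Polynomial ℚ))

/-- a_m(q) ∈ ℚ[x][q,q⁻¹]: a_m = ∑_{l=0}^{m-1}(-q)^l for m > 0, a_0 = 0,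
a_m = -∑_{l=1}^{-m}(-q)^{-l} for m < 0.  Here q = T 1. -/
noncomputable def aQ (m : ℤ) : RQ :=
  if 0 < m then ∑ l ∈ Finset.range m.toNat, (-1 : RQ) ^ l * LaurentPolynomial.T (l : ℤ)
  else -∑ l ∈ Finset.range (-m).toNat, (-1 : RQ) ^ (l + 1) * LaurentPolynomial.T (-(l + 1 : ℤ))

/-- The matrix D_{n,k}(x+c, q) (1-based (i,j) entry binom(x+c+i+j-2, j-1)·a_{j-i+k}(q)). -/
noncomputable def Dmat (n : ℕ) (k c : ℤ) : Matrix (Fin n) (Fin n) RQ :=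
  Matrix.of fun i j =>
    LaurentPolynomial.C
      (binomQ (Polynomial.X + Polynomial.C (c : ℚ) + ((i : ℕ) : Polynomial ℚ)
        + ((j : ℕ) : Polynomial ℚ)) (j : ℕ)) *
    aQ ((j : ℤ) - (i : ℤ) + k)

/-- d_{n,k}(x+c, q) := det D_{n,k}(x+c, q). -/
noncomputable def dd (n : ℕ) (k c : ℤ) : RQ := (Dmat n k c).det

/-!
A minor of `D_{n,k}(x,q)` on consecutive rows and columns again has the shape of `D`, except that
the lower index of each binomial coefficient is too large by the number `s` of columns skipped. The
identity
`binom(j + s, j) · binom(z + i + j, j + s) = binom(z + i + j, j) · binom(z + i, s)`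
splits off this excess as a factor depending only on the column and a factor depending only on the
row. For `s = 1` these factors are `j + 1` and `z + i`, and their products over all columns and rows
combine to a single binomial coefficient. Of the numbers `a_{j-i+k}` nothing matters but that they
are constant along diagonals.
-/

section BinomialRing

variable {R : Type*} [CommRing R] [BinomialRing R]

lemma factorial_nsmul_choose_eq_prod_range_sub (y : R) (n : ℕ) :
    n.factorial • Ring.choose y n = ∏ t ∈ range n, (y - t) := by
  rw [← Ring.descPochhammer_eq_factorial_smul_choose, descPochhammer_smeval_eq_ascPochhammer,
    ascPochhammer_smeval_eq_eval, ← descPochhammer_eval_eq_ascPochhammer,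
    descPochhammer_eval_eq_prod_range]

lemma factorial_nsmul_choose_add_eq_prod_range_add (y : R) (n : ℕ) :
    n.factorial • Ring.choose (y + n) n = ∏ i ∈ range n, (y + 1 + i) := by
  rw [factorial_nsmul_choose_eq_prod_range_sub, ← prod_range_reflect]
  refine prod_congr rfl fun i hi => ?_
  rw [Nat.sub_sub, Nat.cast_sub (by grind)]
  push_cast
  ring

/-- The infinite matrix, indexed from `0`, with entries `binom(y + i + j, j) · a_{j - i + k}`: the
entrywise product of a matrix of binomial coefficients with a Toeplitz matrix. For `a = aQ` and
`y = x + c` its leading `n × n` block is `D_{n,k}(x + c, q)`, which the paper indexes from `1`. -/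
def binomToeplitz (a : ℤ → R) (k : ℤ) (y : R) : Matrix ℕ ℕ R :=
  Matrix.of fun i j => Ring.choose (y + i + j) j * a (j - i + k)

/-- The `n × n` minor of `binomToeplitz a k y` on the consecutive rows from `r` and the consecutive
columns from `s`. -/
def binomToeplitzMinor (a : ℤ → R) (k : ℤ) (y : R) (n r s : ℕ) : R :=
  ((binomToeplitz a k y).submatrix (fun i : Fin n => i + r) (fun j : Fin n => j + s)).det

lemma choose_mul_binomToeplitz_add (a : ℤ → R) (k : ℤ) (y : R) (r s i j : ℕ) :
    ((j + s).choose j : R) * binomToeplitz a k y (i + r) (j + s) =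
      Ring.choose (y + r + s + i) s * binomToeplitz a (k + s - r) (y + r + s) i j := by
  have trinomial : ((j + s).choose j : R) * Ring.choose (y + r + s + i + j) (j + s) =
      Ring.choose (y + r + s + i + j) j * Ring.choose (y + r + s + i) s := by
    rw [add_comm j s, ← nsmul_eq_mul, Ring.choose_add_smul_choose]
  have upper : y + ((i + r : ℕ) : R) + ((j + s : ℕ) : R) = y + r + s + i + j := by
    push_cast
    ring
  have diagonal : ((j + s : ℕ) : ℤ) - ((i + r : ℕ) : ℤ) + k = j - i + (k + s - r) := by
    push_cast
    ring
  simp only [binomToeplitz, Matrix.of_apply]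
  rw [upper, diagonal, ← mul_assoc, trinomial]
  ring

theorem prod_choose_mul_binomToeplitzMinor (a : ℤ → R) (k : ℤ) (y : R) (n r s : ℕ) :
    (∏ j : Fin n, ((j + s : ℕ).choose j : R)) * binomToeplitzMinor a k y n r s =
      (∏ i : Fin n, Ring.choose (y + r + s + (i : ℕ)) s) *
        binomToeplitzMinor a (k + s - r) (y + r + s) n 0 0 := by
  rw [binomToeplitzMinor, binomToeplitzMinor, ← Matrix.det_mul_row, ← Matrix.det_mul_column]
  congr 1
  ext i j
  exact choose_mul_binomToeplitz_add a k y r s i j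

lemma binomToeplitzMinor_zero_right (a : ℤ → R) (k : ℤ) (y : R) (n r : ℕ) :
    binomToeplitzMinor a k y n r 0 = binomToeplitzMinor a (k - r) (y + r) n 0 0 := by
  simpa using prod_choose_mul_binomToeplitzMinor a k y n r 0

lemma binomToeplitzMinor_one_right (a : ℤ → R) (k : ℤ) (y : R) (n r : ℕ) :
    binomToeplitzMinor a k y n r 1 =
      Ring.choose (y + r + n) n * binomToeplitzMinor a (k + 1 - r) (y + r + 1) n 0 0 := by
  have columns : ∏ j : Fin n, ((j + 1 : ℕ).choose j : R) = n.factorial := by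
    simp only [Nat.choose_succ_self_right]
    rw [Fin.prod_univ_eq_prod_range (fun j : ℕ => ((j + 1 : ℕ) : R)), ← Nat.cast_prod,
      prod_range_add_one_eq_factorial]
  have rows : ∏ i : Fin n, Ring.choose (y + r + (1 : ℕ) + (i : ℕ)) 1 =
      n.factorial • Ring.choose (y + r + n) n := by
    simp only [Ring.choose_one_right, Nat.cast_one]
    rw [factorial_nsmul_choose_add_eq_prod_range_add,
      Fin.prod_univ_eq_prod_range (fun i : ℕ => y + r + 1 + (i : R))]
  have scaled := prod_choose_mul_binomToeplitzMinor a k y n r 1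
  rw [columns, rows, ← nsmul_eq_mul, smul_mul_assoc, Nat.cast_one, Nat.cast_one] at scaled
  have := BinomialRing.toIsAddTorsionFree (R := R)
  exact nsmul_right_injective n.factorial_ne_zero scaled

end BinomialRing

lemma binomQ_eq_choose (p : ℚ[X]) (m : ℕ) : binomQ p m = Ring.choose p m := by
  rw [binomQ, ← factorial_nsmul_choose_eq_prod_range_sub, ← Polynomial.smul_eq_C_mul,
    ← Nat.cast_smul_eq_nsmul ℚ, inv_smul_smul₀ (Nat.cast_ne_zero.2 m.factorial_ne_zero)]

lemma C_binomQ (p : ℚ[X]) (m : ℕ) :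
    LaurentPolynomial.C (binomQ p m) = Ring.choose (LaurentPolynomial.C p) m := by
  rw [binomQ_eq_choose, Ring.map_choose]

lemma Dmat_apply (n : ℕ) (k c : ℤ) (i j : Fin n) :
    Dmat n k c i j = binomToeplitz aQ k (LaurentPolynomial.C X + (c : RQ)) i j := by
  simp [Dmat, binomToeplitz, C_binomQ]

lemma dd_eq_binomToeplitzMinor (n : ℕ) (k c : ℤ) :
    dd n k c = binomToeplitzMinor aQ k (LaurentPolynomial.C X + (c : RQ)) n 0 0 :=
  congrArg Matrix.det (Matrix.ext (Dmat_apply n k c))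

lemma det_submatrix_Dmat {N n r s : ℕ} {k c : ℤ} {f g : Fin n → Fin N}
    (hf : ∀ i, (f i : ℕ) = i + r) (hg : ∀ j, (g j : ℕ) = j + s) :
    ((Dmat N k c).submatrix f g).det =
      binomToeplitzMinor aQ k (LaurentPolynomial.C X + (c : RQ)) n r s := by
  refine congrArg Matrix.det (Matrix.ext fun i j => ?_)
  rw [Matrix.submatrix_apply, Dmat_apply, hf, hg, Matrix.submatrix_apply]

theorem det_submatrix_Dmat_eq_dd {N n r : ℕ} {k c : ℤ} {f g : Fin n → Fin N}
    (hf : ∀ i, (f i : ℕ) = i + r) (hg : ∀ j, (g j : ℕ) = j) :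
    ((Dmat N k c).submatrix f g).det = dd n (k - r) (c + r) := by
  rw [det_submatrix_Dmat (s := 0) hf hg, binomToeplitzMinor_zero_right, dd_eq_binomToeplitzMinor]
  push_cast
  rw [add_assoc]

theorem det_submatrix_Dmat_succ_eq_binomQ_mul_dd {N n r : ℕ} {k c : ℤ} {f g : Fin n → Fin N}
    (hf : ∀ i, (f i : ℕ) = i + r) (hg : ∀ j, (g j : ℕ) = j + 1) :
    ((Dmat N k c).submatrix f g).det =
      LaurentPolynomial.C (binomQ (X + ((c + r + n : ℤ) : ℚ[X])) n) *
        dd n (k + 1 - r) (c + r + 1) := by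
  rw [det_submatrix_Dmat hf hg, binomToeplitzMinor_one_right, dd_eq_binomToeplitzMinor, C_binomQ]
  simp [add_assoc]

/-- the five minors of D_{n,k}(x,q) (here n = m+2 ≥ 2):
(i) delete first row and first column; (ii) delete last row and last column;
(iii) delete the first and last rows and columns; (iv) delete first row and last column;
(v) delete last row and first column. -/
theorem statement1 (m : ℕ) (k : ℤ) :
    (((Dmat (m + 2) k 0).submatrix Fin.succ Fin.succ).det
        = LaurentPolynomial.C (binomQ (Polynomial.X + ((m + 2 : ℕ) : Polynomial ℚ)) (m + 1))
            * dd (m + 1) k 2) ∧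
    (((Dmat (m + 2) k 0).submatrix Fin.castSucc Fin.castSucc).det = dd (m + 1) k 0) ∧
    (((Dmat (m + 2) k 0).submatrix (fun i : Fin m => i.succ.castSucc)
        (fun j : Fin m => j.succ.castSucc)).det
        = LaurentPolynomial.C (binomQ (Polynomial.X + ((m + 1 : ℕ) : Polynomial ℚ)) m)
            * dd m k 2) ∧
    (((Dmat (m + 2) k 0).submatrix Fin.succ Fin.castSucc).det = dd (m + 1) (k - 1) 1) ∧
    (((Dmat (m + 2) k 0).submatrix Fin.castSucc Fin.succ).det
        = LaurentPolynomial.C (binomQ (Polynomial.X + ((m + 1 : ℕ) : Polynomial ℚ)) (m + 1))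
            * dd (m + 1) (k + 1) 1) := by
  refine ⟨?_, ?_, ?_, ?_, ?_⟩
  · have minor := det_submatrix_Dmat_succ_eq_binomQ_mul_dd (r := 1) (k := k) (c := 0)
      (Fin.val_succ (n := m + 1)) Fin.val_succ
    convert minor using 3 <;> push_cast <;> ring_nf
  · have minor := det_submatrix_Dmat_eq_dd (r := 0) (k := k) (c := 0)
      (Fin.val_castSucc (n := m + 1)) Fin.val_castSucc
    simpa using minor
  · have minor := det_submatrix_Dmat_succ_eq_binomQ_mul_dd (r := 1) (k := k) (c := 0)
      (fun i : Fin m => i.succ.val_castSucc) (fun j : Fin m => j.succ.val_castSucc)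
    convert minor using 3 <;> push_cast <;> ring_nf
  · have minor := det_submatrix_Dmat_eq_dd (r := 1) (k := k) (c := 0)
      (Fin.val_succ (n := m + 1)) Fin.val_castSucc
    simpa using minor
  · have minor := det_submatrix_Dmat_succ_eq_binomQ_mul_dd (r := 0) (k := k) (c := 0)
      (Fin.val_castSucc (n := m + 1)) Fin.val_succ
    simpa using minor

end
end

section
/- Let n and k be positive integers. Then, in the ring ℚ[q,q⁻¹][x], the determinant d_{n,k}(x,q) is divisible by the polynomial ∏_{l=0}^{⌊(n−k−1)/2⌋}(x+k+2l+1) (the product being empty, hence equal to 1, if n−k−1 < 0). -/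
open Polynomial LaurentPolynomial Finset

noncomputable section

/-!
Modulo `x + r` with `r = k + 2l + 1`, the `l + 1` rows `k + l, …, k + 2l` (counted from `0`) of
`D_{n,k}` vanish in the `n - l` columns `j ≥ l`: if `i + j ≥ r` then `x + r` is one of the linear
factors of `binom(x + i + j, j)`, and the only other possibility is `j - i + k = 0`, where `a_0 = 0`.
A zero block whose numbers of rows and columns add up to more than `n` makes the determinant vanish,
so `x + r` divides it. The linear factors for different `l` are coprime, hence their product
divides it as well.
-/

section CommRing

variable {R : Type*} [CommRing R]

theorem isCoprime_add_add_of_isUnit_sub (x : R) {a b : R} (h : IsUnit (a - b)) :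
    IsCoprime (x + a) (x + b) := by
  obtain ⟨u, hu⟩ := h
  refine ⟨↑u⁻¹, -↑u⁻¹, ?_⟩
  calc ↑u⁻¹ * (x + a) + -↑u⁻¹ * (x + b) = ↑u⁻¹ * (a - b) := by ring
    _ = 1 := by rw [← hu, Units.inv_mul]

/-- By Frobenius–König, every permutation meets a block this large, so each term of the Leibniz
expansion has a factor divisible by `p`. -/
theorem dvd_det_of_card_lt_card_add_card {ι : Type*} [Fintype ι] [DecidableEq ι]
    {A : Matrix ι ι R} {p : R} {S T : Finset ι} (hcard : Fintype.card ι < #S + #T)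
    (hA : ∀ i ∈ S, ∀ j ∈ T, p ∣ A i j) : p ∣ A.det := by
  rw [Matrix.det_apply']
  refine Finset.dvd_sum fun σ _ => Dvd.dvd.mul_left ?_ _
  obtain ⟨i, hi⟩ : (S ∩ T.map σ.toEmbedding).Nonempty :=
    inter_nonempty_of_card_lt_card_add_card (subset_univ _) (subset_univ _)
      (by rwa [card_map, card_univ])
  obtain ⟨hiS, hiT⟩ := mem_inter.1 hi
  obtain ⟨j, hjT, rfl⟩ := mem_map.1 hiT
  exact (hA _ hiS j hjT).trans (dvd_prod_of_mem (fun j => A (σ j) j) (mem_univ j))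

end CommRing

theorem sub_natCast_dvd_binomQ (y : ℚ[X]) {t m : ℕ} (ht : t < m) :
    y - (t : ℚ[X]) ∣ binomQ y m :=
  (dvd_prod_of_mem (fun t : ℕ => y - (t : ℚ[X])) (mem_range.2 ht)).mul_left _

theorem add_natCast_dvd_binomQ (y : ℚ[X]) {i j r : ℕ} (hi : i < r) (hr : r ≤ i + j) :
    y + (r : ℚ[X]) ∣ binomQ (y + (i : ℚ[X]) + (j : ℚ[X])) j := by
  have hfactor : y + (i : ℚ[X]) + (j : ℚ[X]) - ((i + j - r : ℕ) : ℚ[X]) = y + (r : ℚ[X]) := by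
    rw [Nat.cast_sub hr, Nat.cast_add]
    ring
  exact hfactor ▸ sub_natCast_dvd_binomQ _ (by omega : i + j - r < j)

theorem aQ_zero : aQ 0 = 0 := by
  simp [aQ]

section WeightedBinomMatrix

variable {R : Type*} [CommRing R]

/-- The matrix `D_{n,k}(y, q)` with an arbitrary sequence `a` of elements of a ring `R` in place of
`a_m(q)`. The binomial coefficients are formed in `ℚ[x]`, as `binomQ` requires, and then sent to `R`
by `φ`; both indices start at `0`. -/
def weightedBinomMatrix (φ : ℚ[X] →+* R) (y : ℚ[X]) (a : ℤ → R) (n : ℕ) (k : ℤ) :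
    Matrix (Fin n) (Fin n) R :=
  Matrix.of fun i j =>
    φ (binomQ (y + ((i : ℕ) : ℚ[X]) + ((j : ℕ) : ℚ[X])) (j : ℕ)) * a ((j : ℤ) - (i : ℤ) + k)

theorem Dmat_eq_weightedBinomMatrix (n : ℕ) (k c : ℤ) :
    Dmat n k c =
      weightedBinomMatrix LaurentPolynomial.C (X + Polynomial.C (c : ℚ)) aQ n k :=
  rfl

variable (φ : ℚ[X] →+* R) (y : ℚ[X]) {a : ℤ → R}

theorem dvd_weightedBinomMatrix_apply (ha : a 0 = 0) {n k l : ℕ} {i j : Fin n}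
    (hi : k + l ≤ (i : ℕ)) (hi' : (i : ℕ) ≤ k + 2 * l) (hj : l ≤ (j : ℕ)) :
    φ (y + ((k + 2 * l + 1 : ℕ) : ℚ[X])) ∣ weightedBinomMatrix φ y a n k i j := by
  rw [weightedBinomMatrix, Matrix.of_apply]
  by_cases hij : k + 2 * l + 1 ≤ (i : ℕ) + j
  · exact (map_dvd φ (add_natCast_dvd_binomQ y (Nat.lt_succ_of_le hi') hij)).mul_right _
  · have hdiag : (j : ℤ) - (i : ℤ) + k = 0 := by omega
    rw [hdiag, ha, mul_zero]
    exact dvd_zero _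

theorem dvd_det_weightedBinomMatrix (ha : a 0 = 0) {n k l : ℕ} (h : k + 2 * l + 1 ≤ n) :
    φ (y + ((k + 2 * l + 1 : ℕ) : ℚ[X])) ∣ (weightedBinomMatrix φ y a n k).det := by
  let rows : Finset (Fin n) := Icc ⟨k + l, by omega⟩ ⟨k + 2 * l, by omega⟩
  let cols : Finset (Fin n) := Ici ⟨l, by omega⟩
  have hcard : Fintype.card (Fin n) < #rows + #cols := by
    simp only [rows, cols, Fintype.card_fin, Fin.card_Icc, Fin.card_Ici]
    omega
  refine dvd_det_of_card_lt_card_add_card hcard fun i hi j hj => ?_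
  obtain ⟨hki, hik⟩ := mem_Icc.1 hi
  have hlj : ⟨l, _⟩ ≤ j := mem_Ici.1 hj
  exact dvd_weightedBinomMatrix_apply φ y ha hki hik hlj

theorem statement3_general (ha : a 0 = 0) (n k : ℕ) :
    φ (∏ l ∈ range ((n - k + 1) / 2), (y + Polynomial.C ((k : ℚ) + 2 * l + 1)))
      ∣ (weightedBinomMatrix φ y a n k).det := by
  rw [map_prod]
  refine prod_dvd_of_coprime (fun s _ t _ hst => IsCoprime.map ?_ φ) fun l hl => ?_
  · have hsub : (k + 2 * s + 1 : ℚ) - (k + 2 * t + 1) ≠ 0 := fun h =>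
      hst (Nat.cast_injective (R := ℚ) (by linarith))
    refine isCoprime_add_add_of_isUnit_sub y ?_
    rw [← Polynomial.C_sub]
    exact hsub.isUnit.map Polynomial.C
  · have hln : k + 2 * l + 1 ≤ n := by
      have := mem_range.1 hl
      omega
    have hcast : Polynomial.C ((k : ℚ) + 2 * l + 1) = ((k + 2 * l + 1 : ℕ) : ℚ[X]) := by
      exact_mod_cast Polynomial.C_eq_natCast (k + 2 * l + 1)
    rw [hcast]
    exact dvd_det_weightedBinomMatrix φ y ha hln

end WeightedBinomMatrix

/-- for positive integers n, k, the polynomial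
∏_{l=0}^{⌊(n-k-1)/2⌋}(x+k+2l+1) (with ⌊(n-k-1)/2⌋+1 = ⌊(n-k+1)/2⌋ factors, the empty product
if n-k-1 < 0) divides d_{n,k}(x,q) in ℚ[x][q,q⁻¹]. -/
theorem statement3 (n k : ℕ) (hn : 1 ≤ n) (hk : 1 ≤ k) :
    LaurentPolynomial.C (∏ l ∈ Finset.range ((n - k + 1) / 2),
        (Polynomial.X + Polynomial.C ((k : ℚ) + 2 * l + 1)))
      ∣ dd n (k : ℤ) 0 := by
  simpa [dd, Dmat_eq_weightedBinomMatrix] using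
    statement3_general LaurentPolynomial.C X aQ_zero n k

end
end

section
/- For every odd positive integer n, the determinant d_{n,0}(x,q) is identically zero, i.e. d_{n,0}(x,q) = 0 in ℚ[x][q,q⁻¹]. -/
open Polynomial LaurentPolynomial Finset

noncomputable section

/-!
A skew-symmetric matrix of odd size has determinant zero, and `D_{n,0}(x, q)` becomes skew-symmetric
once its row of index `i` (counting from 0) is multiplied by `binom(x+i, i)·(-q)^i`. Indeed
`binom(x+i, i)·binom(x+i+j, j) = (x+1)(x+2)⋯(x+i+j) / (i!·j!)` is symmetric in `i` and `j`, while
`(1+q)·a_m = 1 - (-q)^m` gives `(1+q)·(-q)^i·a_{j-i} = (-q)^i - (-q)^j`, which is antisymmetric.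
-/

theorem det_eq_zero_of_transpose_eq_neg {ι R : Type*} [Fintype ι] [DecidableEq ι] [CommRing R]
    (h2 : (2 : R) ∈ nonZeroDivisors R) (hodd : Odd (Fintype.card ι)) {M : Matrix ι ι R}
    (hM : M.transpose = -M) : M.det = 0 := by
  have hdet : M.det = -M.det := by
    simpa only [Matrix.det_transpose, Matrix.det_neg, hodd.neg_one_pow, neg_one_mul]
      using congrArg Matrix.det hM
  exact (mul_right_mem_nonZeroDivisors_eq_zero_iff h2).mp (by linear_combination hdet)

theorem det_eq_zero_of_row_mul_skew {ι R : Type*} [Fintype ι] [DecidableEq ι] [CommRing R]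
    (h2 : (2 : R) ∈ nonZeroDivisors R) (hodd : Odd (Fintype.card ι)) {M : Matrix ι ι R} {w : ι → R}
    (hw : ∀ i, w i ∈ nonZeroDivisors R) (hM : ∀ i j, w i * M i j = -(w j * M j i)) :
    M.det = 0 := by
  have hdet : (Matrix.of fun i j => w i * M i j).det = 0 :=
    det_eq_zero_of_transpose_eq_neg h2 hodd (Matrix.ext fun i j => hM j i)
  rw [Matrix.det_mul_column] at hdet
  exact (mul_left_mem_nonZeroDivisors_eq_zero_iff (prod_mem fun i _ => hw i)).mp hdet

theorem binomQ_ne_zero {y : ℚ[X]} (hy : y.natDegree ≠ 0) (m : ℕ) : binomQ y m ≠ 0 := by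
  have hfactor (t : ℕ) : y - (t : ℚ[X]) ≠ 0 := fun h => by
    rw [sub_eq_zero.mp h, natDegree_natCast] at hy
    exact hy rfl
  exact mul_ne_zero (Polynomial.C_ne_zero.mpr (by positivity))
    (Finset.prod_ne_zero_iff.mpr fun t _ => hfactor t)

theorem binomQ_add_natCast (y : ℚ[X]) (m : ℕ) :
    binomQ (y + m) m =
      Polynomial.C (m.factorial : ℚ)⁻¹ * (ascPochhammer ℚ[X] m).eval (y + 1) := by
  rw [binomQ, ← descPochhammer_eval_eq_prod_range, descPochhammer_eval_eq_ascPochhammer,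
    add_sub_cancel_right]

theorem binomQ_mul_binomQ (y : ℚ[X]) (i j : ℕ) :
    binomQ (y + i) i * binomQ (y + i + j) j =
      Polynomial.C (i.factorial : ℚ)⁻¹ * Polynomial.C (j.factorial : ℚ)⁻¹ *
        (ascPochhammer ℚ[X] (i + j)).eval (y + 1) := by
  have hmul : (ascPochhammer ℚ[X] i).eval (y + 1) * (ascPochhammer ℚ[X] j).eval (y + i + 1) =
      (ascPochhammer ℚ[X] (i + j)).eval (y + 1) := by
    simp only [← ascPochhammer_mul, eval_mul, eval_comp, eval_add, eval_X, eval_natCast,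
      add_right_comm]
  rw [binomQ_add_natCast, binomQ_add_natCast, ← hmul, mul_mul_mul_comm]

theorem binomQ_mul_binomQ_comm (y : ℚ[X]) (i j : ℕ) :
    binomQ (y + i) i * binomQ (y + i + j) j = binomQ (y + j) j * binomQ (y + j + i) i := by
  rw [binomQ_mul_binomQ, binomQ_mul_binomQ, add_comm j i, mul_comm (Polynomial.C _)]

theorem neg_T_mul_neg_T_neg {R : Type*} [Ring R] (m : ℤ) : (-T m : R[T;T⁻¹]) * -T (-m) = 1 :=
  (neg_mul_neg (T m : R[T;T⁻¹]) (T (-m))).trans (by rw [← T_add, add_neg_cancel, T_zero])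

theorem neg_T_pow {R : Type*} [Ring R] (m : ℤ) (l : ℕ) :
    (-T m : R[T;T⁻¹]) ^ l = (-1) ^ l * T (l * m) :=
  -- The negation found on Laurent polynomials agrees with that of their ring structure only by
  -- unfolding, so `neg_pow` (like `neg_mul_neg`) applies as a term but does not rewrite.
  (neg_pow (T m : R[T;T⁻¹]) l).trans (by rw [T_pow])

/-- The unit `-q` of `ℚ[x][q,q⁻¹]`, which makes sense of the powers `(-q)^m` for integers `m`. -/
def negQ : RQˣ where
  val := -T 1
  inv := -T (-1)
  val_inv := neg_T_mul_neg_T_neg 1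
  inv_val := neg_T_mul_neg_T_neg (-1)

theorem coe_negQ : (negQ : RQ) = -T 1 := rfl

theorem coe_negQ_pow (l : ℕ) : (negQ : RQ) ^ l = (-1) ^ l * T (l : ℤ) := by
  rw [coe_negQ, neg_T_pow, mul_one]

theorem coe_inv_negQ_pow (l : ℕ) : ((negQ⁻¹ : RQˣ) : RQ) ^ l = (-1) ^ l * T (-l : ℤ) := by
  rw [← mul_neg_one (l : ℤ), ← neg_T_pow]
  rfl

theorem one_sub_negQ_ne_zero : 1 - (negQ : RQ) ≠ 0 := by
  have h : toLaurent (X + Polynomial.C 1 : ℚ[X][X]) = 1 - (negQ : RQ) := by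
    rw [coe_negQ, map_add, toLaurent_X, map_one, map_one]
    ring
  exact h ▸ toLaurent_ne_zero.mpr (X_add_C_ne_zero 1)

theorem one_sub_mul_sum_inv_pow_succ {R : Type*} [Ring R] (u : Rˣ) (m : ℕ) :
    (1 - (u : R)) * ∑ l ∈ range m, ((u⁻¹ : Rˣ) : R) ^ (l + 1) = ((u⁻¹ : Rˣ) : R) ^ m - 1 := by
  simp only [pow_succ', ← Finset.mul_sum]
  rw [← mul_assoc, sub_mul, Units.mul_inv, one_mul, mul_geom_sum]

theorem aQ_natCast (m : ℕ) : aQ m = ∑ l ∈ range m, (negQ : RQ) ^ l := by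
  rcases m.eq_zero_or_pos with rfl | hm
  · simp [aQ]
  · simp only [aQ, Nat.cast_pos, if_pos hm, Int.toNat_natCast, coe_negQ_pow]

theorem aQ_neg_natCast (m : ℕ) :
    aQ (-m) = -∑ l ∈ range m, ((negQ⁻¹ : RQˣ) : RQ) ^ (l + 1) := by
  have hm : ¬ (0 : ℤ) < -m := by lia
  simp only [aQ, if_neg hm, neg_neg, Int.toNat_natCast, coe_inv_negQ_pow, Nat.cast_add_one]

theorem one_sub_negQ_mul_aQ (m : ℤ) : (1 - (negQ : RQ)) * aQ m = 1 - ((negQ ^ m : RQˣ) : RQ) := by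
  obtain ⟨k, rfl | rfl⟩ := m.eq_nat_or_neg
  · rw [aQ_natCast, mul_neg_geom_sum, zpow_natCast, Units.val_pow_eq_pow_val]
  · rw [aQ_neg_natCast, zpow_neg, zpow_natCast, ← inv_pow, Units.val_pow_eq_pow_val]
    linear_combination -one_sub_mul_sum_inv_pow_succ negQ k

theorem negQ_zpow_mul_aQ_sub_swap (i j : ℤ) :
    ((negQ ^ i : RQˣ) : RQ) * aQ (j - i) = -(((negQ ^ j : RQˣ) : RQ) * aQ (i - j)) := by
  have hsub (i j : ℤ) : (1 - (negQ : RQ)) * (((negQ ^ i : RQˣ) : RQ) * aQ (j - i)) =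
      ((negQ ^ i : RQˣ) : RQ) - ((negQ ^ j : RQˣ) : RQ) := by
    rw [mul_left_comm, one_sub_negQ_mul_aQ, mul_sub, mul_one, ← Units.val_mul, ← zpow_add,
      add_sub_cancel]
  refine mul_left_cancel₀ one_sub_negQ_ne_zero ?_
  linear_combination hsub i j + hsub j i

/-- The factor `binom(x+c+i, i)·(-q)^i` by which the row of index `i` (counted from 0) of
`D_{n,0}(x+c, q)` is multiplied to make the matrix skew-symmetric. -/
def rowWeight (c : ℤ) (i : ℕ) : RQ :=
  LaurentPolynomial.C (binomQ (X + Polynomial.C (c : ℚ) + (i : ℚ[X])) i) *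
    ((negQ ^ (i : ℤ) : RQˣ) : RQ)

theorem rowWeight_ne_zero (c : ℤ) (i : ℕ) : rowWeight c i ≠ 0 := by
  have hdeg : (X + Polynomial.C (c : ℚ) + (i : ℚ[X])).natDegree ≠ 0 := by
    rw [add_assoc, ← map_natCast Polynomial.C, ← map_add, natDegree_X_add_C]
    exact one_ne_zero
  refine mul_ne_zero ?_ (negQ ^ (i : ℤ)).ne_zero
  rw [LaurentPolynomial.C_eq_algebraMap]
  exact (FaithfulSMul.algebraMap_eq_zero_iff _ _).not.mpr (binomQ_ne_zero hdeg i)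

theorem rowWeight_mul_Dmat_swap (n : ℕ) (c : ℤ) (i j : Fin n) :
    rowWeight c i * Dmat n 0 c i j = -(rowWeight c j * Dmat n 0 c j i) := by
  have hbinom := congrArg (LaurentPolynomial.C (R := ℚ[X]))
    (binomQ_mul_binomQ_comm (X + Polynomial.C (c : ℚ)) i j)
  rw [map_mul, map_mul] at hbinom
  simp only [rowWeight, Dmat, Matrix.of_apply, add_zero]
  rw [mul_mul_mul_comm, hbinom, negQ_zpow_mul_aQ_sub_swap, mul_mul_mul_comm]
  ring

theorem statement5_general (n : ℕ) (hodd : Odd n) (c : ℤ) : dd n 0 c = 0 := by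
  have : CharZero RQ := algebraRat.charZero RQ
  exact det_eq_zero_of_row_mul_skew (mem_nonZeroDivisors_of_ne_zero two_ne_zero)
    ((Fintype.card_fin n).symm ▸ hodd)
    (fun i => mem_nonZeroDivisors_of_ne_zero (rowWeight_ne_zero c i)) (rowWeight_mul_Dmat_swap n c)

/-- for every odd positive integer n, d_{n,0}(x,q) = 0. -/
theorem statement5 (n : ℕ) (hpos : 0 < n) (hodd : Odd n) : dd n 0 0 = 0 :=
  statement5_general n hodd 0

end
end
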